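/- arXiv:2310.18202 — 2 statements merged into one kernel-verified Lean document; each statement's English description precedes it below -/
import Mathlib

section
/- Let F be a graph with at least one edge and let G be an n-vertex graph that is ε-far from F-free. Then G has a subgraph G' with at least (ε/|V(F)|^{|V(F)|})^{1/2}·n vertices that is uniformly ε/(2·|V(F)|^{|V(F)|})-far from F-free. -/
/-- `G` contains a copy of `F`, i.e. a subgraph isomorphic to `F`
(equivalently an injective graph homomorphism from `F`). -/
def ContainsCopy {α β : Type*} (F : SimpleGraph α) (G : SimpleGraph β) : Prop :=
  ∃ f : F →g G, Function.Injective f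

/-- The number of copies of `H` in `G`, i.e. the number of subgraphs of `G`
isomorphic to `H`. -/
noncomputable def copyCount {α β : Type*} (H : SimpleGraph α) (G : SimpleGraph β) : ℕ :=
  {G' : G.Subgraph | Nonempty (H ≃g G'.coe)}.ncard

/-- `G` is `ε`-far from `F`-free: every graph obtained from `G` by deleting fewer than
`ε·|V(G)|²` edges still contains a copy of `F`. -/
def FarFromFree {α β : Type*} (F : SimpleGraph α) (G : SimpleGraph β) (ε : ℝ) : Prop :=
  ∀ G' : SimpleGraph β, G' ≤ G →
    ((G.edgeSet \ G'.edgeSet).ncard : ℝ) < ε * (Nat.card β : ℝ) ^ 2 →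
    ContainsCopy F G'

/-- `H` is `F`-abundant: there are constants `c, C > 0` such that for every `ε ∈ (0,1)`
and all sufficiently large `n`, every `n`-vertex graph that is `ε`-far from `F`-free
contains at least `c·ε^C·n^{|V(H)|}` copies of `H`. -/
def Abundant {α β : Type*} (F : SimpleGraph α) (H : SimpleGraph β) : Prop :=
  ∃ c C : ℝ, 0 < c ∧ 0 < C ∧ ∀ ε : ℝ, 0 < ε → ε < 1 → ∃ n₀ : ℕ, ∀ n : ℕ, n₀ ≤ n →
    ∀ G : SimpleGraph (Fin n), FarFromFree F G ε →
      c * ε ^ C * (n : ℝ) ^ (Nat.card β) ≤ (copyCount H G : ℝ)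
/-- `f` is a copy map from `F` into `G`: an injective map sending edges to edges. -/
def IsCopyMap {α β : Type*} (F : SimpleGraph α) (G : SimpleGraph β) (f : α → β) : Prop :=
  Function.Injective f ∧ ∀ a b, F.Adj a b → G.Adj (f a) (f b)

/-- `G` is uniformly `ε`-far from `F`-free, with witnessing `F`-partition given by the
homomorphism `π : G →g F` (the parts are `V_i = π⁻¹(i)`): there is a collection `𝒞` of
pairwise edge-disjoint copies of `F` in `G`, each placed so that the vertex playing the
role of `i ∈ V(F)` lies in `V_i`, such that every vertex of `G` lies in at least
`ε·|V(G)|` copies of `F` from `𝒞`. -/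
def UniformlyFarWith {α β : Type*} (F : SimpleGraph α) (G : SimpleGraph β)
    (π : G →g F) (ε : ℝ) : Prop :=
  ∃ 𝒞 : Set (α → β),
    (∀ f ∈ 𝒞, IsCopyMap F G f ∧ ∀ a, π (f a) = a) ∧
    (∀ f ∈ 𝒞, ∀ g ∈ 𝒞, f ≠ g → ∀ a b a' b', F.Adj a b → F.Adj a' b' →
      s(f a, f b) ≠ s(g a', g b')) ∧
    (∀ v : β, ε * (Nat.card β : ℝ) ≤ (({x ∈ 𝒞 | v ∈ Set.range x}).ncard : ℝ))

/-- An `F`-coloured graph `(H, σ)` is `F`-abundant: there are constants `c, C > 0` such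
that for every `ε ∈ (0,1)` and all sufficiently large `n`, every `n`-vertex graph `G`
that is uniformly `ε`-far from `F`-free with `F`-partition induced by `π : G →g F`
contains at least `c·ε^C·n^{|V(H)|}` injective homomorphisms of `H` into `G` mapping
each vertex `v` of `H` into the part `V_{σ(v)}`. -/
def ColouredAbundant {α β : Type*} (F : SimpleGraph α) (H : SimpleGraph β)
    (σ : H →g F) : Prop :=
  ∃ c C : ℝ, 0 < c ∧ 0 < C ∧ ∀ ε : ℝ, 0 < ε → ε < 1 → ∃ n₀ : ℕ, ∀ n : ℕ, n₀ ≤ n →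
    ∀ G : SimpleGraph (Fin n), ∀ π : G →g F, UniformlyFarWith F G π ε →
      c * ε ^ C * (n : ℝ) ^ (Nat.card β) ≤
        (({f : β → Fin n | IsCopyMap H G f ∧ ∀ v, π (f v) = σ v}).ncard : ℝ)

section Abstract

open Classical in
/-- Turan-type independent set bound. -/
theorem aux_indep {X : Type*} (R : X → X → Prop) (hR : ∀ x y, R x y → R y x) (D : ℝ) :
    ∀ (n : ℕ) (P : Finset X), P.card = n →
    ∃ I : Finset X, I ⊆ P ∧ (∀ x ∈ I, ∀ y ∈ I, x ≠ y → ¬ R x y) ∧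
      (1 + 2 * D) * (P.card : ℝ) - ∑ x ∈ P, ((P.filter (fun y => x ≠ y ∧ R x y)).card : ℝ)
        ≤ (1 + D) ^ 2 * (I.card : ℝ) := by
  intro n
  induction n using Nat.strong_induction_on with
  | _ n ih =>
  intro P hP
  rcases P.eq_empty_or_nonempty with rfl | hne
  · exact ⟨∅, by simp, by simp, by simp⟩
  obtain ⟨v, hv, hmin⟩ := Finset.exists_min_image P
    (fun x => (P.filter (fun y => x ≠ y ∧ R x y)).card) hne
  set N := P.filter (fun y => v ≠ y ∧ R v y) with hN
  have hvN : v ∉ N := by simp [hN]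
  set B := insert v N with hB
  have hBP : B ⊆ P := by
    intro y hy
    rcases Finset.mem_insert.1 hy with rfl | hy
    · exact hv
    · exact (Finset.mem_filter.1 hy).1
  have hBcard : B.card = N.card + 1 := Finset.card_insert_of_notMem hvN
  have hcard : (P \ B).card + B.card = P.card := Finset.card_sdiff_add_card_eq_card hBP
  obtain ⟨I, hI, hind, hbd⟩ := ih (P \ B).card (by omega) (P \ B) rfl
  have hvI : v ∉ I := fun h => (Finset.mem_sdiff.1 (hI h)).2 (Finset.mem_insert_self _ _)
  refine ⟨insert v I, ?_, ?_, ?_⟩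
  · intro y hy
    rcases Finset.mem_insert.1 hy with rfl | hy
    · exact hv
    · exact (Finset.mem_sdiff.1 (hI hy)).1
  · have key : ∀ y ∈ I, v ≠ y → ¬ R v y := by
      intro y hy hvy hr
      have := Finset.mem_sdiff.1 (hI hy)
      exact this.2 (Finset.mem_insert_of_mem (Finset.mem_filter.2 ⟨this.1, hvy, hr⟩))
    intro x hx y hy hxy
    rcases Finset.mem_insert.1 hx with hx2 | hx2
    · subst hx2
      rcases Finset.mem_insert.1 hy with hy2 | hy2
      · exact absurd hy2.symm hxy
      · exact key y hy2 hxy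
    · rcases Finset.mem_insert.1 hy with hy2 | hy2
      · subst hy2
        exact fun h => key x hx2 (Ne.symm hxy) (hR _ _ h)
      · exact hind x hx2 y hy2 hxy
  · have h1 : ∑ x ∈ P \ B, (((P \ B).filter (fun y => x ≠ y ∧ R x y)).card : ℝ)
        ≤ ∑ x ∈ P \ B, ((P.filter (fun y => x ≠ y ∧ R x y)).card : ℝ) := by
      apply Finset.sum_le_sum
      intro x _
      exact_mod_cast Finset.card_le_card (Finset.filter_subset_filter _ Finset.sdiff_subset)
    have h2 : ∑ x ∈ P \ B, ((P.filter (fun y => x ≠ y ∧ R x y)).card : ℝ)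
        + ∑ x ∈ B, ((P.filter (fun y => x ≠ y ∧ R x y)).card : ℝ)
        = ∑ x ∈ P, ((P.filter (fun y => x ≠ y ∧ R x y)).card : ℝ) :=
      Finset.sum_sdiff hBP
    have h3 : (B.card : ℝ) * (N.card : ℝ)
        ≤ ∑ x ∈ B, ((P.filter (fun y => x ≠ y ∧ R x y)).card : ℝ) := by
      rw [← nsmul_eq_mul]
      apply Finset.card_nsmul_le_sum
      intro x hx
      exact_mod_cast hmin x (hBP hx)
    rw [Finset.card_insert_of_notMem hvI]
    have hc : ((P \ B).card : ℝ) + (B.card : ℝ) = P.card := by exact_mod_cast hcard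
    have hc2 : (B.card : ℝ) = N.card + 1 := by exact_mod_cast hBcard
    rw [← hc, ← h2]
    push_cast
    rw [hc2] at h3 ⊢
    nlinarith [sq_nonneg ((N.card : ℝ) - D)]

open Classical in
/-- A locally optimal family. -/
theorem aux_opt {X : Type*} (Y : Finset X) (K : X → X → ℝ) (hs : ∀ x y, K x y = K y x)
    (hd : ∀ x, K x x = 0) (D : ℝ) :
    ∃ T : Finset X, T ⊆ Y ∧ (∀ f ∈ T, ∑ g ∈ T, K f g ≤ D) ∧
      (∀ f ∈ Y, f ∉ T → D < ∑ g ∈ T, K f g) := by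
  set Φ : Finset X → ℝ := fun T => 2 * D * T.card - ∑ f ∈ T, ∑ g ∈ T, K f g with hΦ
  have hins : ∀ (T : Finset X) (f : X), f ∉ T →
      Φ (insert f T) = Φ T + 2 * D - 2 * ∑ g ∈ T, K f g := by
    intro T f hf
    simp only [hΦ]
    rw [Finset.card_insert_of_notMem hf, Finset.sum_insert hf, Finset.sum_insert hf, hd]
    have : ∑ x ∈ T, ∑ g ∈ insert f T, K x g = ∑ g ∈ T, K f g + ∑ x ∈ T, ∑ g ∈ T, K x g := by
      rw [← Finset.sum_add_distrib]
      apply Finset.sum_congr rfl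
      intro x _
      rw [Finset.sum_insert hf, hs x f]
    rw [this]
    push_cast
    ring
  obtain ⟨T0, hT0, hmax0⟩ := Finset.exists_max_image Y.powerset Φ ⟨∅, by simp⟩
  obtain ⟨T, hT, hmax⟩ := Finset.exists_max_image (Y.powerset.filter (fun T => Φ T0 ≤ Φ T))
    Finset.card ⟨T0, by simp [Finset.mem_powerset.1 hT0]⟩
  rw [Finset.mem_filter, Finset.mem_powerset] at hT
  have hTopt : ∀ T' ⊆ Y, Φ T' ≤ Φ T := fun T' h =>
    (hmax0 T' (Finset.mem_powerset.2 h)).trans hT.2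
  refine ⟨T, hT.1, ?_, ?_⟩
  · intro f hf
    have h1 := hTopt (T.erase f) ((Finset.erase_subset _ _).trans hT.1)
    have h2 := hins (T.erase f) f (Finset.notMem_erase _ _)
    rw [Finset.insert_erase hf] at h2
    have h3 : ∑ g ∈ T, K f g = ∑ g ∈ T.erase f, K f g := by
      rw [← Finset.add_sum_erase T _ hf, hd, zero_add]
    rw [h3]
    linarith
  · intro f hfY hf
    by_contra hle
    push Not at hle
    have h2 := hins T f hf
    have hsub : insert f T ⊆ Y := Finset.insert_subset hfY hT.1
    have := hmax (insert f T) (by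
      rw [Finset.mem_filter, Finset.mem_powerset]
      refine ⟨hsub, ?_⟩
      have := hT.2
      linarith)
    rw [Finset.card_insert_of_notMem hf] at this
    omega

open Classical in
/-- Covering with thresholds. -/
theorem aux_cover {X E V : Type*} [Fintype V] (T : Finset X) (S : Finset E) (hS : S.Nonempty)
    (φ : X → E → V) (t : E → ℕ) (ht : ∀ e ∈ S, 0 < t e)
    (hsum : ∑ e ∈ S, (1 : ℝ) / t e ≤ 1) :
    ∃ H : Finset V, H.card ≤ T.card ∧ (∀ g ∈ T, ∃ e ∈ S, φ g e ∈ H) ∧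
      (∀ x, x ∉ H → ∀ e ∈ S, (T.filter (fun g => φ g e = x)).card < t e) := by
  set H0 : Finset V := Finset.univ.filter
    (fun x => ∃ e ∈ S, t e ≤ (T.filter (fun g => φ g e = x)).card) with hH0
  set Z := T.filter (fun g => ∃ e ∈ S, φ g e ∈ H0) with hZ
  obtain ⟨e0, he0⟩ := hS
  set H1 := (T \ Z).image (fun g => φ g e0) with hH1
  have hcard0 : H0.card ≤ Z.card := by
    have h1 : (H0.card : ℝ) ≤ ∑ x ∈ H0, ∑ e ∈ S, ∑ g ∈ Z, if φ g e = x then (1 : ℝ) / t e else 0 := by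
      have : (H0.card : ℝ) = ∑ x ∈ H0, (1 : ℝ) := by simp
      rw [this]
      apply Finset.sum_le_sum
      intro x hx
      obtain ⟨e, he, hte⟩ := (Finset.mem_filter.1 hx).2
      have h2 : (1 : ℝ) ≤ ∑ g ∈ Z, if φ g e = x then (1 : ℝ) / t e else 0 := by
        rw [← Finset.sum_filter, Finset.sum_const, nsmul_eq_mul]
        have hsub : T.filter (fun g => φ g e = x) ⊆ Z.filter (fun g => φ g e = x) := by
          intro g hg
          rw [Finset.mem_filter] at hg ⊢
          refine ⟨Finset.mem_filter.2 ⟨hg.1, e, he, ?_⟩, hg.2⟩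
          rw [hg.2]; exact hx
        have h3 : (t e : ℝ) ≤ ((Z.filter (fun g => φ g e = x)).card : ℝ) := by
          exact_mod_cast hte.trans (Finset.card_le_card hsub)
        have h4 : (0 : ℝ) < t e := by exact_mod_cast ht e he
        rw [mul_one_div, le_div_iff₀ h4]
        linarith
      refine h2.trans ?_
      apply Finset.single_le_sum (f := fun e => ∑ g ∈ Z, if φ g e = x then (1 : ℝ) / t e else 0) _ he
      intro e _
      apply Finset.sum_nonneg
      intro g _
      split_ifs <;> positivity
    have h2 : ∑ x ∈ H0, ∑ e ∈ S, ∑ g ∈ Z, (if φ g e = x then (1 : ℝ) / t e else 0)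
        ≤ ∑ g ∈ Z, ∑ e ∈ S, (1 : ℝ) / t e := by
      rw [Finset.sum_comm]
      simp_rw [Finset.sum_comm (s := H0)]
      rw [Finset.sum_comm]
      apply Finset.sum_le_sum
      intro g _
      apply Finset.sum_le_sum
      intro e _
      rw [Finset.sum_ite_eq]
      split_ifs
      · exact le_rfl
      · positivity
    have h3 : ∑ g ∈ Z, ∑ e ∈ S, (1 : ℝ) / t e ≤ Z.card := by
      calc _ ≤ ∑ g ∈ Z, (1 : ℝ) := Finset.sum_le_sum (fun _ _ => hsum)
        _ = _ := by simp
    exact_mod_cast h1.trans (h2.trans h3)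
  refine ⟨H0 ∪ H1, ?_, ?_, ?_⟩
  · have h1 : H1.card ≤ (T \ Z).card := Finset.card_image_le
    have h2 : (T \ Z).card + Z.card = T.card :=
      Finset.card_sdiff_add_card_eq_card (Finset.filter_subset _ _)
    have := Finset.card_union_le H0 H1
    omega
  · intro g hg
    by_cases hgZ : g ∈ Z
    · obtain ⟨e, he, hh⟩ := (Finset.mem_filter.1 hgZ).2
      exact ⟨e, he, Finset.mem_union_left _ hh⟩
    · exact ⟨e0, he0, Finset.mem_union_right _
        (Finset.mem_image_of_mem _ (Finset.mem_sdiff.2 ⟨hg, hgZ⟩))⟩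
  · intro x hx e he
    by_contra hlt
    push Not at hlt
    exact hx (Finset.mem_union_left _ (Finset.mem_filter.2 ⟨Finset.mem_univ _, e, he, hlt⟩))

end Abstract

section Packing

/-- Two maps share an edge of `F` in the same roles. -/
def Conf {α β : Type*} (F : SimpleGraph α) (f g : α → β) : Prop :=
  ∃ a b, F.Adj a b ∧ f a = g a ∧ f b = g b

/-- A large proper non-conflicting family. -/
def Pack {α β : Type*} (F : SimpleGraph α) (G : SimpleGraph β) (x : ℝ) : Prop :=
  ∃ π : β → α, ∃ P : Finset (α → β), (∀ f ∈ P, IsCopyMap F G f ∧ ∀ a, π (f a) = a) ∧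
    (∀ f ∈ P, ∀ g ∈ P, f ≠ g → ¬ Conf F f g) ∧ x ≤ (P.card : ℝ)

theorem cover_fact {α β : Type*} [Fintype β] (F : SimpleGraph α) (G : SimpleGraph β) (ε : ℝ)
    (h : FarFromFree F G ε) (H : Finset (Sym2 β))
    (hH : ∀ f : α → β, IsCopyMap F G f → ∃ a b, F.Adj a b ∧ s(f a, f b) ∈ H) :
    ε * (Fintype.card β : ℝ) ^ 2 ≤ H.card := by
  by_contra hlt
  push Not at hlt
  have := h (G.deleteEdges (H : Set (Sym2 β))) (SimpleGraph.deleteEdges_le _) (by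
    rw [Nat.card_eq_fintype_card]
    refine lt_of_le_of_lt ?_ hlt
    have : (G.edgeSet \ (G.deleteEdges (H : Set (Sym2 β))).edgeSet) ⊆ (H : Set (Sym2 β)) := by
      rw [SimpleGraph.edgeSet_deleteEdges]
      intro x hx
      by_contra hx2
      exact hx.2 ⟨hx.1, hx2⟩
    have h2 := Set.ncard_le_ncard this (Finset.finite_toSet H)
    rw [Set.ncard_coe_finset] at h2
    exact_mod_cast h2)
  obtain ⟨f, hf⟩ := this
  obtain ⟨a, b, hab, hs⟩ := hH f ⟨hf, fun a b hab => SimpleGraph.deleteEdges_le _ (f.map_adj hab)⟩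
  have h3 := f.map_adj hab
  rw [SimpleGraph.deleteEdges_adj] at h3
  exact h3.2 hs

open Classical in
theorem count_pi {α β : Type*} [Fintype α] [Fintype β] (U : Finset β) (p : β → α) :
    (Finset.univ.filter (fun π : β → α => ∀ u ∈ U, π u = p u)).card * Fintype.card α ^ U.card
      = Fintype.card α ^ Fintype.card β := by
  have h1 : (Finset.univ.filter (fun π : β → α => ∀ u ∈ U, π u = p u)) =
      Fintype.piFinset (fun b => if b ∈ U then {p b} else (Finset.univ : Finset α)) := by
    ext π
    simp only [Finset.mem_filter, Finset.mem_univ, true_and, Fintype.mem_piFinset]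
    constructor
    · intro h b
      split_ifs with hb
      · simp [h b hb]
      · simp
    · intro h u hu
      have := h u
      simpa [hu] using this
  rw [h1, Fintype.card_piFinset]
  have h2 : ∀ b, (if b ∈ U then {p b} else (Finset.univ : Finset α)).card
      = if b ∈ U then 1 else Fintype.card α := by
    intro b; split_ifs <;> simp
  simp_rw [h2]
  rw [Finset.prod_ite]
  simp only [Finset.prod_const_one, one_mul, Finset.prod_const]
  rw [← pow_add]
  congr 1
  rw [← Finset.card_univ, ← Finset.card_filter_add_card_filter_not (s := Finset.univ) (fun x => x ∈ U)]
  have : (Finset.univ.filter (fun x => x ∈ U)) = U := by ext; simp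
  rw [this]; ring

open Classical in
theorem count_proper {α β : Type*} [Fintype α] [Fintype β] [Nonempty α] (f : α → β)
    (hf : Function.Injective f) :
    (Finset.univ.filter (fun π : β → α => ∀ a, π (f a) = a)).card * Fintype.card α ^ Fintype.card α
      = Fintype.card α ^ Fintype.card β := by
  have := count_pi (Finset.univ.image f) (Function.invFun f)
  rw [Finset.card_image_of_injective _ hf, Finset.card_univ] at this
  rw [← this]
  congr 2
  ext π
  simp [Function.leftInverse_invFun hf _]

open Classical in
theorem count_proper2 {α β : Type*} [Fintype α] [Fintype β] (f g : α → β)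
    (hf : Function.Injective f) (hg : Function.Injective g) :
    (Finset.univ.filter (fun π : β → α => (∀ a, π (f a) = a) ∧ ∀ a, π (g a) = a)).card
      * (Fintype.card α ^ Fintype.card α
        * Fintype.card α ^ (Finset.univ.filter (fun a => f a ≠ g a)).card)
      ≤ Fintype.card α ^ Fintype.card β := by
  by_cases hne : ∃ π0 : β → α, (∀ a, π0 (f a) = a) ∧ ∀ a, π0 (g a) = a
  · obtain ⟨π0, h1, h2⟩ := hne
    set U := Finset.univ.image f ∪ (Finset.univ.filter (fun a => f a ≠ g a)).image g with hU
    have hUc : U.card = Fintype.card α + (Finset.univ.filter (fun a => f a ≠ g a)).card := by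
      rw [hU, Finset.card_union_of_disjoint, Finset.card_image_of_injective _ hf,
        Finset.card_image_of_injective _ hg, Finset.card_univ]
      rw [Finset.disjoint_left]
      intro x hx hx2
      simp only [Finset.mem_image, Finset.mem_filter, Finset.mem_univ, true_and] at hx hx2
      obtain ⟨a, rfl⟩ := hx
      obtain ⟨b, hb, hab⟩ := hx2
      have h3 : b = a := by rw [← h1 a, ← hab, h2 b]
      subst h3
      exact hb hab.symm
    have := count_pi U π0
    rw [← this, hUc, pow_add]
    apply Nat.mul_le_mul_right
    apply Finset.card_le_card
    intro π hπ
    simp only [Finset.mem_filter, Finset.mem_univ, true_and] at hπ ⊢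
    intro u hu
    rw [hU, Finset.mem_union, Finset.mem_image, Finset.mem_image] at hu
    rcases hu with ⟨a, _, rfl⟩ | ⟨a, _, rfl⟩
    · rw [hπ.1, h1]
    · rw [hπ.2, h2]
  · have : (Finset.univ.filter (fun π : β → α => (∀ a, π (f a) = a) ∧ ∀ a, π (g a) = a)) = ∅ := by
      rw [Finset.filter_eq_empty_iff]
      intro π _ hπ
      exact hne ⟨π, hπ⟩
    rw [this]; simp

open Classical in
set_option maxHeartbeats 2000000 in
theorem main_lemma {α β : Type*} [Fintype α] [Fintype β]
    (F : SimpleGraph α) (G : SimpleGraph β) (ε : ℝ)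
    (hF : F.edgeSet.Nonempty) (h : FarFromFree F G ε) (m t : Sym2 α → ℕ) (D : ℝ) (hD : 0 ≤ D)
    (hP : ∀ R : Finset α, R.Nonempty → (∃ e ∈ F.edgeFinset, ∀ a ∈ e, a ∉ R) →
      ∃ e ∈ F.edgeFinset, (∀ a ∈ e, a ∉ R) ∧ m e ≤ R.card)
    (ht : ∀ e ∈ F.edgeFinset, 0 < t e)
    (hsum : ∑ e ∈ F.edgeFinset, (1 : ℝ) / t e ≤ 1)
    (hDs : ∑ e ∈ F.edgeFinset, ((t e : ℝ) - 1) / (Fintype.card α : ℝ) ^ (m e) ≤ D) :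
    Pack F G (1 / (1 + D) * (ε / (Fintype.card α : ℝ) ^ (Fintype.card α)
      * (Fintype.card β : ℝ) ^ 2)) := by
  obtain ⟨e0, he0⟩ := hF
  have hα : Nonempty α := ⟨(Quot.out e0).1⟩
  set k := Fintype.card α with hk
  set n := Fintype.card β with hn
  have hk0 : 0 < k := Fintype.card_pos
  have hkR : (0 : ℝ) < k := by exact_mod_cast hk0
  have hk1 : (1 : ℝ) ≤ k := by exact_mod_cast hk0
  set Nf : (α → β) → (α → β) → ℕ := fun f g =>
    (Finset.univ.filter (fun π : β → α => (∀ a, π (f a) = a) ∧ ∀ a, π (g a) = a)).card with hNf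
  set R : (α → β) → (α → β) → Prop := fun f g => Conf F f g with hR
  have hRs : ∀ f g, R f g → R g f := by
    rintro f g ⟨a, b, hab, h1, h2⟩
    exact ⟨a, b, hab, h1.symm, h2.symm⟩
  set K : (α → β) → (α → β) → ℝ := fun f g =>
    if f ≠ g ∧ R f g then (Nf f g : ℝ) * (k : ℝ) ^ k / (k : ℝ) ^ n else 0 with hK
  have hNs : ∀ f g, Nf f g = Nf g f := by
    intro f g
    simp only [hNf]
    congr 1
    ext π
    simp [and_comm]
  have hKs : ∀ f g, K f g = K g f := by
    intro f g
    simp only [hK]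
    rw [hNs f g]
    have : (f ≠ g ∧ R f g) ↔ (g ≠ f ∧ R g f) :=
      ⟨fun h => ⟨h.1.symm, hRs _ _ h.2⟩, fun h => ⟨h.1.symm, hRs _ _ h.2⟩⟩
    simp only [this]
  set Y : Finset (α → β) := Finset.univ.filter (fun f => IsCopyMap F G f) with hY
  obtain ⟨T, hTY, hTin, hTout⟩ := aux_opt Y K hKs (by intro f; simp [hK]) D
  have hTc : ∀ f ∈ T, IsCopyMap F G f := fun f hf => (Finset.mem_filter.1 (hTY hf)).2
  have hKle : ∀ f g, IsCopyMap F G f → IsCopyMap F G g →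
      (Nf f g : ℝ) * (k : ℝ) ^ k / (k : ℝ) ^ n
        ≤ 1 / (k : ℝ) ^ (Finset.univ.filter (fun a => f a ≠ g a)).card := by
    intro f g hf hg
    have := count_proper2 f g hf.1 hg.1
    have h2 : (Nf f g : ℝ) * ((k : ℝ) ^ k
      * (k : ℝ) ^ (Finset.univ.filter (fun a => f a ≠ g a)).card) ≤ (k : ℝ) ^ n := by
      exact_mod_cast this
    rw [div_le_div_iff₀ (by positivity) (by positivity)]
    linarith
  obtain ⟨H, hHc, hHT, hHl⟩ := aux_cover T F.edgeFinset ⟨e0, by simpa using he0⟩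
    (fun f e => Sym2.map f e) t ht hsum
  have hTbig : ε * (n : ℝ) ^ 2 ≤ T.card := by
    refine (cover_fact F G ε h H ?_).trans (by exact_mod_cast hHc)
    intro f hf
    by_contra hno
    push Not at hno
    have hno2 : ∀ e ∈ F.edgeFinset, Sym2.map f e ∉ H := by
      intro e
      induction e with
      | _ a b =>
      intro he
      rw [SimpleGraph.mem_edgeFinset, SimpleGraph.mem_edgeSet] at he
      simpa using hno a b he
    have hfT : f ∉ T := by
      intro hfT
      obtain ⟨e, he, hh⟩ := hHT f hfT
      exact hno2 e he hh
    have h1 := hTout f (Finset.mem_filter.2 ⟨Finset.mem_univ _, hf⟩) hfT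
    have h2 : ∑ g ∈ T, K f g ≤ ∑ g ∈ T, ∑ e ∈ F.edgeFinset,
        if Sym2.map g e = Sym2.map f e then 1 / (k : ℝ) ^ (m e) else 0 := by
      apply Finset.sum_le_sum
      intro g hg
      by_cases hc : f ≠ g ∧ R f g
      · have hKe : K f g = (Nf f g : ℝ) * (k : ℝ) ^ k / (k : ℝ) ^ n := by
          simp only [hK]; rw [if_pos hc]
        rw [hKe]
        refine (hKle f g hf (hTc g hg)).trans ?_
        obtain ⟨e, he, hav, hme⟩ := hP (Finset.univ.filter (fun a => f a ≠ g a)) (by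
          obtain ⟨a, ha⟩ := Function.ne_iff.1 hc.1
          exact ⟨a, by simpa using ha⟩) (by
          obtain ⟨a, b, hab, h1, h2⟩ := hc.2
          refine ⟨s(a, b), by simpa using hab, ?_⟩
          intro c hc
          rw [Sym2.mem_iff] at hc
          rcases hc with rfl | rfl <;> simp [h1, h2])
        have heq : Sym2.map g e = Sym2.map f e := by
          apply Sym2.map_congr
          intro a ha
          have := hav a ha
          simp at this
          exact this.symm
        refine le_trans ?_ (Finset.single_le_sum (f := fun e =>
          if Sym2.map g e = Sym2.map f e then 1 / (k : ℝ) ^ (m e) else 0) ?_ he)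
        · simp only [heq, if_true]
          apply one_div_le_one_div_of_le (by positivity)
          exact pow_le_pow_right₀ hk1 hme
        · intro e _
          split_ifs <;> positivity
      · have hKe : K f g = 0 := by simp only [hK]; rw [if_neg hc]
        rw [hKe]
        apply Finset.sum_nonneg
        intro e _
        split_ifs <;> positivity
    rw [Finset.sum_comm] at h2
    have h3 : ∑ e ∈ F.edgeFinset, ∑ g ∈ T,
        (if Sym2.map g e = Sym2.map f e then 1 / (k : ℝ) ^ (m e) else 0)
        ≤ ∑ e ∈ F.edgeFinset, ((t e : ℝ) - 1) / (k : ℝ) ^ (m e) := by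
      apply Finset.sum_le_sum
      intro e he
      rw [← Finset.sum_filter, Finset.sum_const, nsmul_eq_mul, mul_one_div]
      apply div_le_div_of_nonneg_right _ (by positivity)
      have := hHl _ (hno2 e he) e he
      have h4 : (((T.filter (fun g => Sym2.map g e = Sym2.map f e)).card + 1 : ℕ) : ℝ) ≤ t e := by
        rw [Nat.cast_le]
        convert Nat.succ_le_of_lt this
      push_cast at h4
      linarith
    linarith
  -- averaging
  have hind : ∀ π : β → α, ∃ I : Finset (α → β), I ⊆ T.filter (fun f => ∀ a, π (f a) = a) ∧
      (∀ x ∈ I, ∀ y ∈ I, x ≠ y → ¬ R x y) ∧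
      (1 + 2 * D) * ((T.filter (fun f => ∀ a, π (f a) = a)).card : ℝ)
        - ∑ x ∈ T.filter (fun f => ∀ a, π (f a) = a),
          (((T.filter (fun f => ∀ a, π (f a) = a)).filter (fun y => x ≠ y ∧ R x y)).card : ℝ)
        ≤ (1 + D) ^ 2 * (I.card : ℝ) := by
    intro π
    convert aux_indep R hRs D _ (T.filter (fun f => ∀ a, π (f a) = a)) rfl
  choose I hIsub hIind hIbd using hind
  set Q : ℝ := (k : ℝ) ^ n / (k : ℝ) ^ k with hQ
  have hQ0 : 0 < Q := by positivity
  have hsA : ∑ π : β → α, ((T.filter (fun f => ∀ a, π (f a) = a)).card : ℝ) = Q * T.card := by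
    have : ∀ π : β → α, ((T.filter (fun f => ∀ a, π (f a) = a)).card : ℝ)
        = ∑ f ∈ T, if ∀ a, π (f a) = a then (1 : ℝ) else 0 := by
      intro π; rw [Finset.sum_boole]
    simp_rw [this]
    rw [Finset.sum_comm]
    have : ∀ f ∈ T, ∑ π : β → α, (if ∀ a, π (f a) = a then (1 : ℝ) else 0) = Q := by
      intro f hf
      rw [Finset.sum_boole, hQ, eq_div_iff (by positivity)]
      exact_mod_cast count_proper f (hTc f hf).1
    rw [Finset.sum_congr rfl this]
    simp [mul_comm]
  have hsB : ∑ π : β → α, ∑ x ∈ T.filter (fun f => ∀ a, π (f a) = a),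
          (((T.filter (fun f => ∀ a, π (f a) = a)).filter (fun y => x ≠ y ∧ R x y)).card : ℝ)
      = Q * ∑ f ∈ T, ∑ g ∈ T, K f g := by
    have h1 : ∀ π : β → α, ∑ x ∈ T.filter (fun f => ∀ a, π (f a) = a),
          (((T.filter (fun f => ∀ a, π (f a) = a)).filter (fun y => x ≠ y ∧ R x y)).card : ℝ)
        = ∑ f ∈ T, ∑ g ∈ T, if (f ≠ g ∧ R f g) then
          (if (∀ a, π (f a) = a) ∧ ∀ a, π (g a) = a then (1 : ℝ) else 0) else 0 := by
      intro π
      rw [Finset.sum_filter]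
      apply Finset.sum_congr rfl
      intro f _
      split_ifs with hp
      · rw [Finset.filter_filter, ← Finset.sum_boole]
        apply Finset.sum_congr rfl
        intro g _
        by_cases h1 : f ≠ g ∧ R f g <;> by_cases h2 : ∀ a, π (g a) = a <;> simp [h1, h2, hp]
      · symm
        apply Finset.sum_eq_zero
        intro g _
        simp [hp]
    simp_rw [h1]
    rw [Finset.sum_comm, Finset.mul_sum]
    apply Finset.sum_congr rfl
    intro f _
    rw [Finset.sum_comm, Finset.mul_sum]
    apply Finset.sum_congr rfl
    intro g _
    simp only [hK]
    by_cases hc : f ≠ g ∧ R f g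
    · simp only [if_pos hc]
      rw [Finset.sum_boole, hQ]
      field_simp
      rfl
    · simp only [if_neg hc]
      simp
  have hKT : ∑ f ∈ T, ∑ g ∈ T, K f g ≤ D * T.card := by
    calc _ ≤ ∑ f ∈ T, D := Finset.sum_le_sum hTin
      _ = _ := by simp [mul_comm]
  have hfin : Q * (1 + D) * T.card ≤ ∑ π : β → α, (1 + D) ^ 2 * ((I π).card : ℝ) := by
    refine le_trans ?_ (Finset.sum_le_sum (fun π _ => hIbd π))
    rw [Finset.sum_sub_distrib, ← Finset.mul_sum, hsA, hsB]
    nlinarith [mul_le_mul_of_nonneg_left hKT hQ0.le]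
  have hex : ∃ π : β → α, (T.card : ℝ) / (k : ℝ) ^ k / (1 + D) ≤ ((I π).card : ℝ) := by
    by_contra hno
    push Not at hno
    have : ∑ π : β → α, (1 + D) ^ 2 * ((I π).card : ℝ)
        < ∑ π : β → α, (1 + D) ^ 2 * ((T.card : ℝ) / (k : ℝ) ^ k / (1 + D)) := by
      apply Finset.sum_lt_sum_of_nonempty Finset.univ_nonempty
      intro π _
      exact mul_lt_mul_of_pos_left (hno π) (by positivity)
    rw [Finset.sum_const, nsmul_eq_mul, Finset.card_univ, Fintype.card_fun] at this
    have h2 : ((Fintype.card α ^ Fintype.card β : ℕ) : ℝ) * ((1 + D) ^ 2 * ((T.card : ℝ) / (k : ℝ) ^ k / (1 + D)))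
        = Q * (1 + D) * T.card := by
      rw [hQ]
      push_cast
      field_simp
      rw [← hk, ← hn]
      ring
    rw [h2] at this
    linarith
  obtain ⟨π, hπ⟩ := hex
  refine ⟨π, I π, ?_, hIind π, le_trans ?_ hπ⟩
  · intro f hf
    have := Finset.mem_filter.1 (hIsub π hf)
    exact ⟨hTc f this.1, this.2⟩
  · have : 1 / (1 + D) * (ε / (k : ℝ) ^ k * (n : ℝ) ^ 2)
        = (ε * (n : ℝ) ^ 2) / (k : ℝ) ^ k / (1 + D) := by
      field_simp
    rw [this]
    gcongr

end Packing

section Trivial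

open Classical in
theorem aux_maxfam {X : Type*} (Y : Finset X) (R : X → X → Prop) (hR : ∀ x y, R x y → R y x) :
    ∃ T : Finset X, T ⊆ Y ∧ (∀ f ∈ T, ∀ g ∈ T, f ≠ g → R f g) ∧
      (∀ f ∈ Y, f ∉ T → ∃ g ∈ T, ¬ R f g) := by
  let p : Finset X → Prop := fun T => ∀ f ∈ T, ∀ g ∈ T, f ≠ g → R f g
  obtain ⟨T, hT, hmax⟩ := Finset.exists_max_image (Y.powerset.filter p)
    Finset.card ⟨∅, by simp [p]⟩
  rw [Finset.mem_filter, Finset.mem_powerset] at hT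
  refine ⟨T, hT.1, hT.2, ?_⟩
  intro f hf hfT
  by_contra hno
  push Not at hno
  have := hmax (insert f T) (by
    rw [Finset.mem_filter, Finset.mem_powerset]
    refine ⟨Finset.insert_subset hf hT.1, ?_⟩
    intro x hx y hy hxy
    rcases Finset.mem_insert.1 hx with hx2 | hx2
    · rcases Finset.mem_insert.1 hy with hy2 | hy2
      · exact absurd (hx2.trans hy2.symm) hxy
      · rw [hx2]; exact hno y hy2
    · rcases Finset.mem_insert.1 hy with hy2 | hy2
      · rw [hy2]; exact hR _ _ (hno x hx2)
      · exact hT.2 x hx2 y hy2 hxy)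
  rw [Finset.card_insert_of_notMem hfT] at this
  omega

open Classical in
set_option maxHeartbeats 1000000 in
theorem triv_lemma {α β : Type*} [Fintype α] [Fintype β]
    (F : SimpleGraph α) (G : SimpleGraph β) (ε : ℝ)
    (hF : F.edgeSet.Nonempty) (h : FarFromFree F G ε) (Γ : Finset (Equiv.Perm α))
    (hΓ : ∀ γ ∈ Γ, ∀ a b, F.Adj a b → F.Adj (γ a) (γ b)) :
    Pack F G ((Γ.card : ℝ) / (F.edgeFinset.card : ℝ) *
      (ε / (Fintype.card α : ℝ) ^ (Fintype.card α) * (Fintype.card β : ℝ) ^ 2)) := by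
  obtain ⟨e0, he0⟩ := hF
  have hα : Nonempty α := ⟨(Quot.out e0).1⟩
  set k := Fintype.card α with hk
  set n := Fintype.card β with hn
  have hk0 : 0 < k := Fintype.card_pos
  have hkR : (0 : ℝ) < k := by exact_mod_cast hk0
  have hE0 : 0 < F.edgeFinset.card := Finset.card_pos.2 ⟨e0, by simpa using he0⟩
  have hER : (0 : ℝ) < F.edgeFinset.card := by exact_mod_cast hE0
  set Im : (α → β) → Finset (Sym2 β) := fun f => F.edgeFinset.image (Sym2.map f) with hIm
  set Y : Finset (α → β) := Finset.univ.filter (fun f => IsCopyMap F G f) with hY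
  obtain ⟨T, hTY, hTd, hmax⟩ := aux_maxfam Y (fun f g => Disjoint (Im f) (Im g))
    (fun f g h => h.symm)
  have hTc : ∀ f ∈ T, IsCopyMap F G f := fun f hf => (Finset.mem_filter.1 (hTY hf)).2
  have hmem : ∀ (f : α → β) a b, F.Adj a b → s(f a, f b) ∈ Im f := by
    intro f a b hab
    exact Finset.mem_image.2 ⟨s(a, b), by simpa using hab, by simp⟩
  have hTbig : ε * (n : ℝ) ^ 2 ≤ T.card * F.edgeFinset.card := by
    refine (cover_fact F G ε h (T.biUnion Im) ?_).trans ?_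
    · intro f hf
      by_contra hno
      push Not at hno
      have hdis : ∀ g ∈ T, Disjoint (Im f) (Im g) := by
        intro g hg
        rw [Finset.disjoint_left]
        intro x hx hxg
        obtain ⟨e, he, rfl⟩ := Finset.mem_image.1 hx
        induction e with
        | _ a b =>
        rw [SimpleGraph.mem_edgeFinset, SimpleGraph.mem_edgeSet] at he
        exact hno a b he (Finset.mem_biUnion.2 ⟨g, hg, by simpa using hxg⟩)
      have hfT : f ∉ T := by
        intro hfT
        have h1 := hdis f hfT
        rw [disjoint_self, Finset.bot_eq_empty] at h1
        have h2 : Sym2.map f e0 ∈ Im f :=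
          Finset.mem_image_of_mem _ (by simpa using he0)
        rw [h1] at h2
        simp at h2
      obtain ⟨g, hg, hnd⟩ := hmax f (Finset.mem_filter.2 ⟨Finset.mem_univ _, hf⟩) hfT
      exact hnd (hdis g hg)
    · have h1 : (T.biUnion Im).card ≤ T.card * F.edgeFinset.card := by
        apply Finset.card_biUnion_le_card_mul
        intro f _
        exact Finset.card_image_le
      exact_mod_cast h1
  set P : (β → α) → Finset ((α → β) × Equiv.Perm α) := fun π =>
    (T ×ˢ Γ).filter (fun p => ∀ a, π (p.1 (p.2 a)) = a) with hP
  set Q : ℝ := (k : ℝ) ^ n / (k : ℝ) ^ k with hQ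
  have hQ0 : 0 < Q := by positivity
  have hsA : ∑ π : β → α, ((P π).card : ℝ) = Q * (T.card * Γ.card) := by
    have : ∀ π : β → α, ((P π).card : ℝ)
        = ∑ p ∈ T ×ˢ Γ, if ∀ a, π (p.1 (p.2 a)) = a then (1 : ℝ) else 0 := by
      intro π; rw [Finset.sum_boole]
    simp_rw [this]
    rw [Finset.sum_comm]
    have : ∀ p ∈ T ×ˢ Γ, ∑ π : β → α, (if ∀ a, π (p.1 (p.2 a)) = a then (1 : ℝ) else 0) = Q := by
      intro p hp
      rw [Finset.sum_boole, hQ, eq_div_iff (by positivity)]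
      exact_mod_cast count_proper (fun a => p.1 (p.2 a))
        ((hTc p.1 (Finset.mem_product.1 hp).1).1.comp p.2.injective)
    rw [Finset.sum_congr rfl this]
    simp [mul_comm]
  have hex : ∃ π : β → α, (T.card : ℝ) * Γ.card / (k : ℝ) ^ k ≤ ((P π).card : ℝ) := by
    by_contra hno
    push Not at hno
    have : ∑ π : β → α, ((P π).card : ℝ)
        < ∑ π : β → α, ((T.card : ℝ) * Γ.card / (k : ℝ) ^ k) := by
      apply Finset.sum_lt_sum_of_nonempty Finset.univ_nonempty
      intro π _
      exact hno π
    rw [Finset.sum_const, nsmul_eq_mul, Finset.card_univ, Fintype.card_fun, hsA, hQ] at this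
    push_cast at this
    rw [← hk, ← hn] at this
    apply lt_irrefl _ (this.trans_le (le_of_eq _))
    field_simp
  obtain ⟨π, hπ⟩ := hex
  have hinjf : ∀ p ∈ P π, ∀ q ∈ P π, Conf F (fun a => p.1 (p.2 a)) (fun a => q.1 (q.2 a)) →
      p = q := by
    intro p hp q hq hc
    rw [hP, Finset.mem_filter, Finset.mem_product] at hp hq
    obtain ⟨a, b, hab, h1, h2⟩ := hc
    have hpq : p.1 = q.1 := by
      by_contra hne
      have hd := hTd p.1 hp.1.1 q.1 hq.1.1 hne
      rw [Finset.disjoint_left] at hd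
      refine hd (hmem p.1 _ _ (hΓ p.2 hp.1.2 a b hab)) ?_
      have h3 := hmem q.1 _ _ (hΓ q.2 hq.1.2 a b hab)
      simp only at h1 h2
      rw [h1, h2]
      exact h3
    have hsurj : Function.Surjective (fun a => π (p.1 a)) := fun a => ⟨p.2 a, hp.2 a⟩
    have hinj := Finite.injective_iff_surjective.2 hsurj
    refine Prod.ext hpq (Equiv.ext fun a => hinj ?_)
    simp only
    rw [hp.2 a, hpq, hq.2 a]
  refine ⟨π, (P π).image (fun p => fun a => p.1 (p.2 a)), ?_, ?_, ?_⟩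
  · intro f hf
    obtain ⟨p, hp, rfl⟩ := Finset.mem_image.1 hf
    rw [hP, Finset.mem_filter, Finset.mem_product] at hp
    refine ⟨⟨(hTc p.1 hp.1.1).1.comp p.2.injective, ?_⟩, hp.2⟩
    intro a b hab
    exact (hTc p.1 hp.1.1).2 _ _ (hΓ p.2 hp.1.2 a b hab)
  · intro f hf g hg hne hc
    obtain ⟨p, hp, rfl⟩ := Finset.mem_image.1 hf
    obtain ⟨q, hq, rfl⟩ := Finset.mem_image.1 hg
    exact hne (by rw [hinjf p hp q hq hc])
  · rw [Finset.card_image_of_injOn]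
    · refine le_trans ?_ hπ
      have h1 : (Γ.card : ℝ) / (F.edgeFinset.card : ℝ) * (ε / (k : ℝ) ^ k * (n : ℝ) ^ 2)
          = (ε * (n : ℝ) ^ 2) / F.edgeFinset.card * Γ.card / (k : ℝ) ^ k := by field_simp
      rw [h1]
      have h2 : (ε * (n : ℝ) ^ 2) / F.edgeFinset.card ≤ T.card := by
        rw [div_le_iff₀ hER]; exact hTbig
      gcongr
    · intro p hp q hq hpq
      apply hinjf p hp q hq
      induction e0 with
      | _ a b =>
      exact ⟨a, b, by simpa using he0, congrFun hpq a, congrFun hpq b⟩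

end Trivial

section Weak

/-- The conclusion. -/
def Concl {α β : Type*} (F : SimpleGraph α) (G : SimpleGraph β) (δ : ℝ) : Prop :=
  ∃ G' : G.Subgraph, ∃ π : G'.coe →g F,
      Real.sqrt δ * (Nat.card β : ℝ) ≤ (Nat.card G'.verts : ℝ) ∧
      UniformlyFarWith F G'.coe π (δ / 2)

/-- Fractional edge bound. -/
def NB {α : Type*} [Fintype α] (F : SimpleGraph α) (ν : ℝ) : Prop :=
  ∀ w : α → ℝ, (∀ a, 0 ≤ w a) → ∀ C : ℝ, 0 ≤ C → (∀ a b, F.Adj a b → C ≤ w a * w b) →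
    C ≤ ν * (∑ a, w a) ^ 2

open Classical in
theorem build {α β : Type*} [Fintype α] [Fintype β] (F : SimpleGraph α) (G : SimpleGraph β)
    (δ : ℝ) (π : β → α) (P : Finset (α → β)) (W : Finset β)
    (hP : ∀ f ∈ P, IsCopyMap F G f ∧ ∀ a, π (f a) = a)
    (hc : ∀ f ∈ P, ∀ g ∈ P, f ≠ g → ¬ Conf F f g)
    (hW : ∀ f ∈ P, ∀ a, f a ∈ W)
    (hdeg : ∀ v ∈ W, δ / 2 * (W.card : ℝ) ≤ ((P.filter (fun f => ∃ a, f a = v)).card : ℝ))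
    (hbig : Real.sqrt δ * (Fintype.card β : ℝ) ≤ W.card) : Concl F G δ := by
  let G' : G.Subgraph :=
    { verts := (W : Set β)
      Adj := fun u v => ∃ f ∈ P, ∃ a b, F.Adj a b ∧ u = f a ∧ v = f b
      adj_sub := by
        rintro u v ⟨f, hf, a, b, hab, rfl, rfl⟩
        exact (hP f hf).1.2 a b hab
      edge_vert := by
        rintro u v ⟨f, hf, a, b, hab, rfl, rfl⟩
        exact hW f hf a
      symm := by
        constructor
        rintro u v ⟨f, hf, a, b, hab, rfl, rfl⟩
        exact ⟨f, hf, b, a, hab.symm, rfl, rfl⟩ }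
  have hcard : Nat.card G'.verts = W.card := by
    show Nat.card (W : Set β) = W.card
    rw [Nat.card_coe_set_eq, Set.ncard_coe_finset]
  let π' : G'.coe →g F :=
    { toFun := fun u => π u.1
      map_rel' := by
        rintro ⟨u, hu⟩ ⟨v, hv⟩ ⟨f, hf, a, b, hab, h1, h2⟩
        simp only at h1 h2 ⊢
        rw [h1, h2, (hP f hf).2, (hP f hf).2]
        exact hab }
  refine ⟨G', π', ?_, {g : α → G'.verts | (fun a => (g a).1) ∈ P}, ?_, ?_, ?_⟩
  · rw [hcard, Nat.card_eq_fintype_card]; exact hbig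
  · intro f hf
    have hf2 : (fun a => (f a).1) ∈ P := hf
    refine ⟨⟨?_, ?_⟩, (hP _ hf2).2⟩
    · intro a b hab
      exact (hP _ hf2).1.1 (congrArg Subtype.val hab)
    · intro a b hab
      exact ⟨_, hf2, a, b, hab, rfl, rfl⟩
  · intro f hf g hg hfg a b a' b' hab hab' heq
    have hf2 : (fun a => (f a).1) ∈ P := hf
    have hg2 : (fun a => (g a).1) ∈ P := hg
    have hne : (fun a => (f a).1) ≠ (fun a => (g a).1) := by
      intro h
      apply hfg
      funext a
      exact Subtype.ext (congrFun h a)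
    have pf := (hP _ hf2).2
    have pg := (hP _ hg2).2
    apply hc _ hf2 _ hg2 hne
    have key : ∀ x y, f x = g y → x = y := by
      intro x y hxy
      rw [← pf x, hxy, pg y]
    rw [Sym2.eq_iff] at heq
    rcases heq with ⟨h1, h2⟩ | ⟨h1, h2⟩
    · have e1 := key _ _ h1
      have e2 := key _ _ h2
      subst e1 e2
      exact ⟨a, b, hab, by simp [h1], by simp [h2]⟩
    · have e1 := key _ _ h1
      have e2 := key _ _ h2
      subst e1 e2
      exact ⟨a, b, hab, by simp [h1], by simp [h2]⟩
  · intro v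
    rw [hcard]
    refine (hdeg v.1 v.2).trans ?_
    have hinj : Function.Injective (fun (g : α → G'.verts) => fun a => (g a).1) := by
      intro f g h
      funext a
      exact Subtype.ext (congrFun h a)
    rw [← Set.ncard_image_of_injective _ hinj, ← Set.ncard_coe_finset]
    apply le_of_eq
    congr 2
    ext f
    simp only [Finset.coe_filter, Set.mem_ofPred_eq, Set.mem_image, Set.mem_range]
    constructor
    · rintro ⟨hf, a, ha⟩
      exact ⟨fun a => ⟨f a, hW f hf a⟩, ⟨hf, a, Subtype.ext ha⟩, rfl⟩
    · rintro ⟨g, ⟨hg, a, ha⟩, rfl⟩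
      exact ⟨hg, a, congrArg Subtype.val ha⟩

open Classical in
theorem weak_lemma {α β : Type*} [Fintype α] [Fintype β] (F : SimpleGraph α) (G : SimpleGraph β)
    (δ ν : ℝ) (hδ : 0 < δ) (hν : 0 < ν) (hNB : NB F ν)
    (hpack : Pack F G ((1 / 4 + ν) * (δ * (Fintype.card β : ℝ) ^ 2)
      + δ * (Fintype.card β : ℝ) / 4)) : Concl F G δ := by
  obtain ⟨π, P, hP, hc, hbig⟩ := hpack
  set n := Fintype.card β with hn
  set PW : Finset β → Finset (α → β) := fun W => P.filter (fun f => ∀ a, f a ∈ W) with hPW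
  set Ψ : Finset β → ℝ := fun W => ((PW W).card : ℝ) - δ / 4 * (W.card * (W.card + 1)) with hΨ
  obtain ⟨W, _, hmax⟩ := Finset.exists_max_image (Finset.univ : Finset (Finset β)) Ψ
    Finset.univ_nonempty
  have hC1 : ν * (δ * (n : ℝ) ^ 2) ≤ ((PW W).card : ℝ) := by
    have h1 := hmax Finset.univ (Finset.mem_univ _)
    have h2 : PW Finset.univ = P := by simp [hPW]
    simp only [hΨ] at h1
    rw [h2, Finset.card_univ, ← hn] at h1
    have h3 : 0 ≤ δ / 4 * ((W.card : ℝ) * (W.card + 1)) := by positivity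
    nlinarith
  have hC2 : ((PW W).card : ℝ) ≤ ν * (W.card : ℝ) ^ 2 := by
    have h1 : ∑ a, ((W.filter (fun v => π v = a)).card : ℝ) = W.card := by
      exact_mod_cast (Finset.card_eq_sum_card_fiberwise (f := π) (s := W) (t := Finset.univ)
        (fun x _ => Finset.mem_univ _)).symm
    rw [← h1]
    apply hNB _ (fun a => by positivity) _ (by positivity)
    intro a b hab
    have h2 : (PW W).card ≤ ((W.filter (fun v => π v = a)) ×ˢ (W.filter (fun v => π v = b))).card := by
      apply Finset.card_le_card_of_injOn (fun f => (f a, f b))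
      · intro f hf
        have hf := Finset.mem_filter.1 hf
        simp [hf.2 a, hf.2 b, (hP f hf.1).2]
      · intro f hf g hg hfg
        have hf := Finset.mem_filter.1 hf
        have hg := Finset.mem_filter.1 hg
        by_contra hne
        have := Prod.ext_iff.1 hfg
        exact hc f hf.1 g hg.1 hne ⟨a, b, hab, this.1, this.2⟩
    rw [Finset.card_product] at h2
    exact_mod_cast h2
  refine build F G δ π (PW W) W (fun f hf => hP f (Finset.mem_filter.1 hf).1)
    (fun f hf g hg => hc f (Finset.mem_filter.1 hf).1 g (Finset.mem_filter.1 hg).1)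
    (fun f hf => (Finset.mem_filter.1 hf).2) ?_ ?_
  · intro v hv
    have h1 := hmax (W.erase v) (Finset.mem_univ _)
    have h2 : (PW (W.erase v)).card + ((PW W).filter (fun f => ∃ a, f a = v)).card
        = (PW W).card := by
      rw [← Finset.card_filter_add_card_filter_not (s := PW W) (fun f => ∃ a, f a = v), add_comm]
      congr 2
      ext f
      simp only [hPW, Finset.mem_filter, Finset.mem_erase, not_exists]
      constructor
      · rintro ⟨h1, h2⟩
        exact ⟨⟨h1, fun a => (h2 a).2⟩, fun a => (h2 a).1⟩
      · rintro ⟨⟨h1, h2⟩, h3⟩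
        exact ⟨h1, fun a => ⟨h3 a, h2 a⟩⟩
    have h3 : ((W.erase v).card : ℝ) = W.card - 1 := by
      rw [← Finset.card_erase_add_one hv]; push_cast; ring
    have h4 : ((PW (W.erase v)).card : ℝ) + (((PW W).filter (fun f => ∃ a, f a = v)).card : ℝ)
        = (PW W).card := by exact_mod_cast h2
    simp only [hΨ] at h1
    rw [h3] at h1
    nlinarith
  · have h1 : δ * (n : ℝ) ^ 2 ≤ (W.card : ℝ) ^ 2 := by
      have := hC1.trans hC2
      exact le_of_mul_le_mul_left this hν
    have h2 : Real.sqrt δ * (n : ℝ) = Real.sqrt (δ * (n : ℝ) ^ 2) := by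
      rw [Real.sqrt_mul hδ.le, Real.sqrt_sq (by positivity)]
    rw [h2]
    exact Real.sqrt_le_iff.2 ⟨by positivity, h1⟩

open Classical in
/-- Reduction to rates. -/
theorem rate_lemma {α β : Type*} [Fintype α] [Fintype β] (F : SimpleGraph α) (G : SimpleGraph β)
    (δ ν c : ℝ) (hδ : 0 < δ) (hν : 0 < ν) (hNB : NB F ν) (hn : 0 < Fintype.card β)
    (hc : 1 / 4 + ν + 1 / (4 * (Fintype.card β : ℝ)) ≤ c)
    (hpack : Pack F G (c * (δ * (Fintype.card β : ℝ) ^ 2))) : Concl F G δ := by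
  apply weak_lemma F G δ ν hδ hν hNB
  obtain ⟨π, P, h1, h2, h3⟩ := hpack
  refine ⟨π, P, h1, h2, le_trans ?_ h3⟩
  have hnR : (0 : ℝ) < Fintype.card β := by exact_mod_cast hn
  calc _ = (1 / 4 + ν + 1 / (4 * (Fintype.card β : ℝ))) * (δ * (Fintype.card β : ℝ) ^ 2) := by
        field_simp
    _ ≤ _ := by gcongr

open Classical in
theorem empty_case {α β : Type*} [Fintype α] [Fintype β] [Nonempty α] (F : SimpleGraph α)
    (G : SimpleGraph β) (δ : ℝ) (hn : Fintype.card β = 0) : Concl F G δ := by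
  apply build F G δ (fun _ => Classical.arbitrary α) ∅ ∅ <;> simp [hn]

open Classical in
theorem single_case {α β : Type*} [Fintype α] [Fintype β] [Nonempty α] (F : SimpleGraph α)
    (G : SimpleGraph β) (δ : ℝ) (hδ : 0 < δ) (f : α → β) (hf : IsCopyMap F G f)
    (hk : δ / 2 * (Fintype.card α : ℝ) ≤ 1)
    (hn : δ * (Fintype.card β : ℝ) ^ 2 ≤ (Fintype.card α : ℝ) ^ 2) : Concl F G δ := by
  have hW : (Finset.univ.image f).card = Fintype.card α := by
    rw [Finset.card_image_of_injective _ hf.1, Finset.card_univ]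
  apply build F G δ (Function.invFun f) {f} (Finset.univ.image f)
  · intro g hg
    rw [Finset.mem_singleton] at hg
    subst hg
    exact ⟨hf, Function.leftInverse_invFun hf.1⟩
  · intro g hg g' hg' hne
    rw [Finset.mem_singleton] at hg hg'
    exact absurd (hg.trans hg'.symm) hne
  · intro g hg a
    rw [Finset.mem_singleton] at hg
    subst hg
    simp
  · intro v hv
    rw [hW]
    obtain ⟨a, _, ha⟩ := Finset.mem_image.1 hv
    rw [Finset.filter_singleton, if_pos ⟨a, ha⟩]
    simpa using hk
  · rw [hW]
    have h2 : Real.sqrt δ * (Fintype.card β : ℝ) = Real.sqrt (δ * (Fintype.card β : ℝ) ^ 2) := by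
      rw [Real.sqrt_mul hδ.le, Real.sqrt_sq (by positivity)]
    rw [h2]
    exact Real.sqrt_le_iff.2 ⟨by positivity, hn⟩

end Weak

section Setup

open Classical in
theorem setup {α β : Type*} [Fintype α] [Fintype β] (F : SimpleGraph α) (G : SimpleGraph β)
    (ε : ℝ) (hε : 0 < ε) (hF : F.edgeSet.Nonempty) (h : FarFromFree F G ε) :
    Concl F G (ε / (Fintype.card α : ℝ) ^ (Fintype.card α)) ∨
      (0 < Fintype.card β ∧
        Fintype.card α ^ (Fintype.card α + 2) < Fintype.card β ^ 2) := by
  obtain ⟨e0, he0⟩ := hF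
  have hα : Nonempty α := ⟨(Quot.out e0).1⟩
  set k := Fintype.card α with hk
  set n := Fintype.card β with hn
  have hk0 : 0 < k := Fintype.card_pos
  have hkR : (0 : ℝ) < k := by exact_mod_cast hk0
  rcases Nat.eq_zero_or_pos n with hn0 | hn0
  · exact Or.inl (empty_case F G _ hn0)
  have hnR : (0 : ℝ) < n := by exact_mod_cast hn0
  obtain ⟨f, hf⟩ := h G le_rfl (by
    rw [Nat.card_eq_fintype_card, ← hn]
    simp only [sdiff_self, Set.bot_eq_empty, Set.ncard_empty, Nat.cast_zero]
    positivity)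
  have hε1 : ε ≤ 1 := by
    have h1 := cover_fact F G ε h G.edgeFinset (by
      intro f hf
      induction e0 with
      | _ a b =>
      refine ⟨a, b, by simpa using he0, ?_⟩
      rw [SimpleGraph.mem_edgeFinset]
      exact hf.2 a b (by simpa using he0))
    have h2 : G.edgeFinset.card ≤ n ^ 2 :=
      SimpleGraph.card_edgeFinset_le_card_choose_two.trans (Nat.choose_le_pow _ _)
    have h3 : (G.edgeFinset.card : ℝ) ≤ (n : ℝ) ^ 2 := by exact_mod_cast h2
    have h4 : ε * (n : ℝ) ^ 2 ≤ 1 * (n : ℝ) ^ 2 := by rw [← hn] at h1; linarith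
    exact le_of_mul_le_mul_right h4 (by positivity)
  by_cases hbig : ε / (k : ℝ) ^ k * (n : ℝ) ^ 2 ≤ (k : ℝ) ^ 2
  · left
    refine single_case F G _ (by positivity) f ⟨hf, fun a b hab => f.map_adj hab⟩ ?_ hbig
    have h1 : (k : ℝ) ≤ (k : ℝ) ^ k := by
      have : k ^ 1 ≤ k ^ k := Nat.pow_le_pow_right hk0 hk0
      exact_mod_cast (by simpa using this)
    rw [div_div, div_mul_eq_mul_div, div_le_one (by positivity)]
    nlinarith
  · right
    refine ⟨hn0, ?_⟩
    push Not at hbig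
    have h1 : (k : ℝ) ^ (k + 2) < (n : ℝ) ^ 2 := by
      rw [div_mul_eq_mul_div, lt_div_iff₀ (by positivity)] at hbig
      rw [pow_add]
      nlinarith [sq_nonneg (n : ℝ)]
    exact_mod_cast h1

open Classical in
theorem ml_levels {α β : Type*} [Fintype α] [Fintype β]
    (F : SimpleGraph α) (G : SimpleGraph β) (ε : ℝ) (hε : 0 < ε)
    (hF : F.edgeSet.Nonempty) (h : FarFromFree F G ε) (hn : 0 < Fintype.card β)
    (ν : ℝ) (hν : 0 < ν) (hNB : NB F ν)
    (A B C : Finset (Sym2 α)) (mA mB mC mR tA tB tC tR : ℕ)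
    (hmAB : mA ≤ mB) (hmBC : mB ≤ mC) (hmCR : mC ≤ mR)
    (htA : 0 < tA) (htB : 0 < tB) (htC : 0 < tC) (htR : 0 < tR)
    (a b c r : ℝ) (ha : (A.card : ℝ) ≤ a) (hb : (B.card : ℝ) ≤ b) (hc : (C.card : ℝ) ≤ c)
    (hr : ((F.edgeFinset \ (A ∪ B ∪ C)).card : ℝ) ≤ r)
    (D : ℝ) (hD : 0 ≤ D)
    (hP : ∀ R : Finset α, R.Nonempty → (∃ e ∈ F.edgeFinset, ∀ x ∈ e, x ∉ R) →
      ∃ e ∈ F.edgeFinset, (∀ x ∈ e, x ∉ R) ∧ ((e ∈ A ∧ mA ≤ R.card) ∨ (e ∈ B ∧ mB ≤ R.card) ∨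
        (e ∈ C ∧ mC ≤ R.card) ∨ mR ≤ R.card))
    (hsum : a / tA + b / tB + c / tC + r / tR ≤ 1)
    (hDs : a * ((tA : ℝ) - 1) / (Fintype.card α : ℝ) ^ mA
      + b * ((tB : ℝ) - 1) / (Fintype.card α : ℝ) ^ mB
      + c * ((tC : ℝ) - 1) / (Fintype.card α : ℝ) ^ mC
      + r * ((tR : ℝ) - 1) / (Fintype.card α : ℝ) ^ mR ≤ D)
    (hcond : 1 / 4 + ν + 1 / (4 * (Fintype.card β : ℝ)) ≤ 1 / (1 + D)) :
    Concl F G (ε / (Fintype.card α : ℝ) ^ (Fintype.card α)) := by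
  have hα : Nonempty α := by
    obtain ⟨e0, he0⟩ := hF
    exact ⟨(Quot.out e0).1⟩
  have hk0 : 0 < Fintype.card α := Fintype.card_pos
  have hkR : (0 : ℝ) < Fintype.card α := by exact_mod_cast hk0
  refine rate_lemma F G _ ν (1 / (1 + D)) (by positivity) hν hNB hn hcond ?_
  have key : ∀ xA xB xC xR : ℝ, 0 ≤ xA → 0 ≤ xB → 0 ≤ xC → 0 ≤ xR →
      ∑ e ∈ F.edgeFinset, (if e ∈ A then xA else if e ∈ B then xB else if e ∈ C then xC else xR)
        ≤ a * xA + b * xB + c * xC + r * xR := by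
    intro xA xB xC xR h1 h2 h3 h4
    have h5 : ∀ e ∈ F.edgeFinset,
        (if e ∈ A then xA else if e ∈ B then xB else if e ∈ C then xC else xR)
        ≤ (if e ∈ A then xA else 0) + (if e ∈ B then xB else 0) + (if e ∈ C then xC else 0)
          + (if e ∉ A ∪ B ∪ C then xR else 0) := by
      intro e _
      by_cases hA : e ∈ A <;> by_cases hB : e ∈ B <;> by_cases hC : e ∈ C <;>
        simp [hA, hB, hC] <;> linarith
    refine (Finset.sum_le_sum h5).trans ?_
    rw [Finset.sum_add_distrib, Finset.sum_add_distrib, Finset.sum_add_distrib]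
    have h6 : ∀ (S : Finset (Sym2 α)) (x y : ℝ), 0 ≤ x → (S.card : ℝ) ≤ y →
        ∑ e ∈ F.edgeFinset, (if e ∈ S then x else 0) ≤ y * x := by
      intro S x y hx hy
      rw [← Finset.sum_filter, Finset.sum_const, nsmul_eq_mul]
      apply mul_le_mul_of_nonneg_right _ hx
      refine le_trans ?_ hy
      have : (F.edgeFinset.filter (fun e => e ∈ S)).card ≤ S.card := by
        apply Finset.card_le_card
        intro e he
        exact (Finset.mem_filter.1 he).2
      exact_mod_cast this
    have h7 : ∑ e ∈ F.edgeFinset, (if e ∉ A ∪ B ∪ C then xR else 0) ≤ r * xR := by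
      rw [← Finset.sum_filter, Finset.sum_const, nsmul_eq_mul]
      apply mul_le_mul_of_nonneg_right _ h4
      refine le_trans (le_of_eq ?_) hr
      congr 2
      ext e
      simp
    have := h6 A xA a h1 ha
    have := h6 B xB b h2 hb
    have := h6 C xC c h3 hc
    linarith
  have hA1 : (1 : ℝ) ≤ tA := by exact_mod_cast htA
  have hB1 : (1 : ℝ) ≤ tB := by exact_mod_cast htB
  have hC1 : (1 : ℝ) ≤ tC := by exact_mod_cast htC
  have hR1 : (1 : ℝ) ≤ tR := by exact_mod_cast htR
  have hq : ∀ (x : ℝ) (m : ℕ), 1 ≤ x → 0 ≤ (x - 1) / (Fintype.card α : ℝ) ^ m := by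
    intro x m hx
    apply div_nonneg (by linarith) (by positivity)
  refine main_lemma F G ε hF h
    (fun e => if e ∈ A then mA else if e ∈ B then mB else if e ∈ C then mC else mR)
    (fun e => if e ∈ A then tA else if e ∈ B then tB else if e ∈ C then tC else tR) D hD ?_ ?_ ?_ ?_
  · intro R hR hex
    obtain ⟨e, he, hav, hcase⟩ := hP R hR hex
    refine ⟨e, he, hav, ?_⟩
    by_cases hA : e ∈ A <;> by_cases hB : e ∈ B <;> by_cases hC : e ∈ C <;>
      simp [hA, hB, hC] at hcase ⊢ <;> omega
  · intro e _
    split_ifs <;> assumption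
  · refine le_trans (le_of_eq ?_) ((key (1 / tA) (1 / tB) (1 / tC) (1 / tR) (by positivity)
      (by positivity) (by positivity) (by positivity)).trans (le_trans (le_of_eq ?_) hsum))
    · apply Finset.sum_congr rfl
      intro e _
      split_ifs <;> rfl
    · ring
  · refine le_trans (le_of_eq ?_) ((key _ _ _ _ (hq tA mA hA1) (hq tB mB hB1) (hq tC mC hC1)
      (hq tR mR hR1)).trans (le_trans (le_of_eq ?_) hDs))
    · apply Finset.sum_congr rfl
      intro e _
      split_ifs <;> rfl
    · ring

open Classical in
theorem tl_concl {α β : Type*} [Fintype α] [Fintype β]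
    (F : SimpleGraph α) (G : SimpleGraph β) (ε : ℝ) (hε : 0 < ε)
    (hF : F.edgeSet.Nonempty) (h : FarFromFree F G ε) (hn : 0 < Fintype.card β)
    (ν : ℝ) (hν : 0 < ν) (hNB : NB F ν) (Γ : Finset (Equiv.Perm α))
    (hΓ : ∀ γ ∈ Γ, ∀ a b, F.Adj a b → F.Adj (γ a) (γ b))
    (hcond : 1 / 4 + ν + 1 / (4 * (Fintype.card β : ℝ)) ≤ (Γ.card : ℝ) / F.edgeFinset.card) :
    Concl F G (ε / (Fintype.card α : ℝ) ^ (Fintype.card α)) := by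
  have hα : Nonempty α := by
    obtain ⟨e0, he0⟩ := hF
    exact ⟨(Quot.out e0).1⟩
  have hk0 : 0 < Fintype.card α := Fintype.card_pos
  have hkR : (0 : ℝ) < Fintype.card α := by exact_mod_cast hk0
  exact rate_lemma F G _ ν _ (by positivity) hν hNB hn hcond (triv_lemma F G ε hF h Γ hΓ)

theorem pad_lemma {X : Type*} [DecidableEq X] (Q Y : Finset X) (q : ℕ) (hQ : Q.card ≤ q) (hQY : Q ⊆ Y) :
    ∃ Q' : Finset X, Q ⊆ Q' ∧ Q' ⊆ Y ∧ Q'.card ≤ q ∧ (Y \ Q').card ≤ Y.card - q := by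
  by_cases h : Y.card ≤ q
  · exact ⟨Y, hQY, Finset.Subset.refl _, h, by simp⟩
  · obtain ⟨Q', h1, h2, h3⟩ := Finset.exists_subsuperset_card_eq hQY hQ (by omega)
    refine ⟨Q', h1, h2, h3.le, ?_⟩
    rw [Finset.card_sdiff_of_subset h2, h3]

theorem two_sqrt_le {x y C : ℝ} (hx : 0 ≤ x) (hy : 0 ≤ y) (hC : 0 ≤ C) (h : C ≤ x * y) :
    2 * Real.sqrt C ≤ x + y := by
  have h1 := Real.sq_sqrt hC
  have h2 := Real.sqrt_nonneg C
  apply le_of_sq_le_sq _ (by positivity)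
  nlinarith [sq_nonneg (x - y)]

open Classical in
theorem sum_ge_subset {α : Type*} [Fintype α] (w : α → ℝ) (hw : ∀ a, 0 ≤ w a) (S : Finset α) :
    ∑ a ∈ S, w a ≤ ∑ a, w a :=
  Finset.sum_le_sum_of_subset_of_nonneg (Finset.subset_univ _) (fun a _ _ => hw a)

open Classical in
theorem nb_one {α : Type*} [Fintype α] (F : SimpleGraph α) (a b : α) (hab : F.Adj a b) :
    NB F (1 / 4) := by
  intro w hw C hC hE
  have h1 := sum_ge_subset w hw {a, b}
  rw [Finset.sum_pair hab.ne] at h1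
  have h2 := hE a b hab
  have := hw a
  have := hw b
  nlinarith [sq_nonneg (w a - w b)]

open Classical in
theorem nb_two {α : Type*} [Fintype α] (F : SimpleGraph α) (a b c d : α) (hab : F.Adj a b)
    (hcd : F.Adj c d) (hac : a ≠ c) (had : a ≠ d) (hbc : b ≠ c) (hbd : b ≠ d) :
    NB F (1 / 16) := by
  intro w hw C hC hE
  have h1 := sum_ge_subset w hw {a, b, c, d}
  have hab' := hab.ne
  have hcd' := hcd.ne
  simp [Finset.sum_insert, *] at h1
  have h2 := two_sqrt_le (hw a) (hw b) hC (hE a b hab)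
  have h3 := two_sqrt_le (hw c) (hw d) hC (hE c d hcd)
  have h4 := Real.sq_sqrt hC
  have h5 := Real.sqrt_nonneg C
  nlinarith

open Classical in
theorem nb_three {α : Type*} [Fintype α] (F : SimpleGraph α) (a b c d x y : α) (hab : F.Adj a b)
    (hcd : F.Adj c d) (hxy : F.Adj x y) (hac : a ≠ c) (had : a ≠ d) (hbc : b ≠ c) (hbd : b ≠ d)
    (hax : a ≠ x) (hay : a ≠ y) (hbx : b ≠ x) (hby : b ≠ y)
    (hcx : c ≠ x) (hcy : c ≠ y) (hdx : d ≠ x) (hdy : d ≠ y) :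
    NB F (1 / 36) := by
  intro w hw C hC hE
  have h1 := sum_ge_subset w hw {a, b, c, d, x, y}
  have hab' := hab.ne
  have hcd' := hcd.ne
  have hxy' := hxy.ne
  simp [Finset.sum_insert, *] at h1
  have h2 := two_sqrt_le (hw a) (hw b) hC (hE a b hab)
  have h3 := two_sqrt_le (hw c) (hw d) hC (hE c d hcd)
  have h3 := two_sqrt_le (hw x) (hw y) hC (hE x y hxy)
  have h4 := Real.sq_sqrt hC
  have h5 := Real.sqrt_nonneg C
  nlinarith

open Classical in
theorem nb_path {α : Type*} [Fintype α] (F : SimpleGraph α) (a b c d x : α) (hab : F.Adj a b)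
    (hcd : F.Adj c d) (hax : F.Adj a x) (hac : a ≠ c) (had : a ≠ d) (hbc : b ≠ c) (hbd : b ≠ d)
    (hbx : b ≠ x) (hcx : c ≠ x) (hdx : d ≠ x) :
    NB F (1 / 23) := by
  intro w hw C hC hE
  have h1 := sum_ge_subset w hw {a, b, c, d, x}
  have hab' := hab.ne
  have hcd' := hcd.ne
  have hax' := hax.ne
  simp [Finset.sum_insert, *] at h1
  have h3 := two_sqrt_le (hw c) (hw d) hC (hE c d hcd)
  have h4 := Real.sq_sqrt hC
  have h5 := Real.sqrt_nonneg C
  have h6 : 2.8 * Real.sqrt C ≤ w a + (w b + w x) := by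
    have := hE a b hab
    have := hE a x hax
    have := hw a
    have := hw b
    have := hw x
    apply le_of_sq_le_sq _ (by positivity)
    nlinarith [sq_nonneg (w a - (w b + w x))]
  have h7 : 4.8 * Real.sqrt C ≤ ∑ a, w a := by linarith
  nlinarith

end Setup

section Cases

theorem n_large {k n : ℕ} (hk : 4 ≤ k) (h : k ^ (k + 2) < n ^ 2) : 64 ≤ n := by
  have h1 : 4 ^ 6 ≤ k ^ (k + 2) :=
    (Nat.pow_le_pow_left hk 6).trans (Nat.pow_le_pow_right (by omega) (by omega))
  by_contra hlt
  push Not at hlt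
  have : n ^ 2 ≤ 63 ^ 2 := Nat.pow_le_pow_left (by omega) 2
  omega

theorem inv_n {n : ℕ} (h : 64 ≤ n) : 1 / (4 * (n : ℝ)) ≤ 1 / 256 := by
  have : (64 : ℝ) ≤ n := by exact_mod_cast h
  apply one_div_le_one_div_of_le (by norm_num)
  linarith

open Classical in
set_option maxHeartbeats 1000000 in
theorem case_three {α β : Type*} [Fintype α] [Fintype β]
    (F : SimpleGraph α) (G : SimpleGraph β) (ε : ℝ) (hε : 0 < ε)
    (h : FarFromFree F G ε)
    (hbig : Fintype.card α ^ (Fintype.card α + 2) < Fintype.card β ^ 2)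
    (a b c d x y : α) (hab : F.Adj a b)
    (hcd : F.Adj c d) (hxy : F.Adj x y) (hac : a ≠ c) (had : a ≠ d) (hbc : b ≠ c) (hbd : b ≠ d)
    (hax : a ≠ x) (hay : a ≠ y) (hbx : b ≠ x) (hby : b ≠ y)
    (hcx : c ≠ x) (hcy : c ≠ y) (hdx : d ≠ x) (hdy : d ≠ y) :
    Concl F G (ε / (Fintype.card α : ℝ) ^ (Fintype.card α)) := by
  have hab' := hab.ne
  have hcd' := hcd.ne
  have hxy' := hxy.ne
  have hk6 : 6 ≤ Fintype.card α := by
    have h1 : ({a, b, c, d, x, y} : Finset α).card = 6 := by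
      repeat rw [Finset.card_insert_of_notMem (by simp [*])]
      simp
    rw [← h1]
    exact Finset.card_le_univ _
  have hn64 := n_large (by omega) hbig
  set A : Finset (Sym2 α) := {s(a, b), s(c, d)} with hA
  set B : Finset (Sym2 α) := {s(x, y)} with hB
  set Y := F.edgeFinset \ (A ∪ B) with hY
  have hABc : (A ∪ B).card = 3 := by
    rw [hA, hB]
    rw [Finset.card_union_of_disjoint, Finset.card_pair, Finset.card_singleton]
    · simp [*]
    · simp [*, hax.symm, hbx.symm, hcx.symm, hdx.symm]
  have hABE : A ∪ B ⊆ F.edgeFinset := by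
    intro e he
    simp only [hA, hB, Finset.mem_union, Finset.mem_insert, Finset.mem_singleton] at he
    rw [SimpleGraph.mem_edgeFinset]
    rcases he with (rfl | rfl) | rfl <;> simpa
  have hYc : Y.card = F.edgeFinset.card - 3 := by
    rw [hY, Finset.card_sdiff_of_subset hABE, hABc]
  set g : α × α × α → Sym2 α := fun p =>
    if hh : ∃ e ∈ F.edgeFinset, ∀ z ∈ e, z ∉ ({p.1, p.2.1, p.2.2} : Finset α)
    then hh.choose else s(a, b) with hg
  set Q0 : Finset (Sym2 α) :=
    ((({a, b} : Finset α) ×ˢ (({c, d} : Finset α) ×ˢ ({x, y} : Finset α))).image g) ∩ Y with hQ0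
  have hQ0c : Q0.card ≤ 8 := by
    refine (Finset.card_le_card Finset.inter_subset_left).trans (Finset.card_image_le.trans ?_)
    rw [Finset.card_product, Finset.card_product, Finset.card_pair hab', Finset.card_pair hcd',
      Finset.card_pair hxy']
  obtain ⟨Q, hQ0Q, hQY, hQc, hYQ⟩ := pad_lemma Q0 Y 8 hQ0c Finset.inter_subset_right
  have he : F.edgeFinset.card ≤ (Fintype.card α).choose 2 :=
    SimpleGraph.card_edgeFinset_le_card_choose_two
  have hch : 2 * (Fintype.card α).choose 2 = Fintype.card α * (Fintype.card α - 1) := by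
    rw [Nat.choose_two_right]
    exact Nat.mul_div_cancel' (Nat.even_mul_pred_self _).two_dvd
  have hch15 : 15 ≤ (Fintype.card α).choose 2 := by
    have h1 : 6 * 5 ≤ Fintype.card α * (Fintype.card α - 1) := Nat.mul_le_mul hk6 (by omega)
    omega
  set wN := (Fintype.card α).choose 2 - 11 with hwN
  have hw4 : 4 ≤ wN := by omega
  have hrest : (F.edgeFinset \ (A ∪ B ∪ Q)).card ≤ wN := by
    have h1 : F.edgeFinset \ (A ∪ B ∪ Q) = Y \ Q := by
      rw [hY, sdiff_sdiff_left]; rfl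
    rw [h1]
    omega
  have hwR : 2 * (wN : ℝ) = (Fintype.card α : ℝ) * ((Fintype.card α : ℝ) - 1) - 22 := by
    have h1 : 2 * wN + 22 = Fintype.card α * (Fintype.card α - 1) := by omega
    have h2 : ((2 * wN + 22 : ℕ) : ℝ) = ((Fintype.card α * (Fintype.card α - 1) : ℕ) : ℝ) := by
      rw [h1]
    rw [Nat.cast_mul, Nat.cast_sub (by omega)] at h2
    push_cast at h2
    linarith
  refine ml_levels F G ε hε ⟨s(a, b), by simpa using hab⟩ h (by omega) (1 / 36) (by norm_num)
    (nb_three F a b c d x y hab hcd hxy hac had hbc hbd hax hay hbx hby hcx hcy hdx hdy)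
    A B Q 1 2 3 4 4 8 32 (8 * wN) (by norm_num) (by norm_num) (by norm_num) (by norm_num)
    (by norm_num) (by norm_num) (by omega) 2 1 8 wN ?_ ?_ ?_ ?_ (5 / 2) (by norm_num) ?_ ?_ ?_ ?_
  · exact_mod_cast (Finset.card_le_two : A.card ≤ 2)
  · simp [hB]
  · exact_mod_cast hQc
  · exact_mod_cast hrest
  · intro R hR hex
    by_cases h1 : a ∉ R ∧ b ∉ R
    · refine ⟨s(a, b), by simpa using hab, ?_, Or.inl ⟨by simp [hA], hR.card_pos⟩⟩
      intro z hz
      rcases Sym2.mem_iff.1 hz with rfl | rfl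
      exacts [h1.1, h1.2]
    by_cases h2 : c ∉ R ∧ d ∉ R
    · refine ⟨s(c, d), by simpa using hcd, ?_, Or.inl ⟨by simp [hA], hR.card_pos⟩⟩
      intro z hz
      rcases Sym2.mem_iff.1 hz with rfl | rfl
      exacts [h2.1, h2.2]
    have h1' : ∃ p ∈ ({a, b} : Finset α), p ∈ R := by
      by_contra hno
      push Not at hno
      exact h1 ⟨hno a (by simp), hno b (by simp)⟩
    have h2' : ∃ p ∈ ({c, d} : Finset α), p ∈ R := by
      by_contra hno
      push Not at hno
      exact h2 ⟨hno c (by simp), hno d (by simp)⟩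
    obtain ⟨p, hp, hpR⟩ := h1'
    obtain ⟨q, hq, hqR⟩ := h2'
    have hpq : p ≠ q := by
      simp only [Finset.mem_insert, Finset.mem_singleton] at hp hq
      rcases hp with rfl | rfl <;> rcases hq with rfl | rfl <;> assumption
    by_cases h3 : x ∉ R ∧ y ∉ R
    · refine ⟨s(x, y), by simpa using hxy, ?_, Or.inr (Or.inl ⟨by simp [hB], ?_⟩)⟩
      · intro z hz
        rcases Sym2.mem_iff.1 hz with rfl | rfl
        exacts [h3.1, h3.2]
      · rw [← Finset.card_pair hpq]
        apply Finset.card_le_card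
        intro z hz
        simp only [Finset.mem_insert, Finset.mem_singleton] at hz
        rcases hz with rfl | rfl <;> assumption
    have h3' : ∃ p ∈ ({x, y} : Finset α), p ∈ R := by
      by_contra hno
      push Not at hno
      exact h3 ⟨hno x (by simp), hno y (by simp)⟩
    obtain ⟨r, hr, hrR⟩ := h3'
    have hpr : p ≠ r := by
      simp only [Finset.mem_insert, Finset.mem_singleton] at hp hr
      rcases hp with rfl | rfl <;> rcases hr with rfl | rfl <;> assumption
    have hqr : q ≠ r := by
      simp only [Finset.mem_insert, Finset.mem_singleton] at hq hr
      rcases hq with rfl | rfl <;> rcases hr with rfl | rfl <;> assumption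
    have h3c : ({p, q, r} : Finset α).card = 3 := by
      rw [Finset.card_insert_of_notMem (by simp [*]), Finset.card_pair hqr]
    have hsub : ({p, q, r} : Finset α) ⊆ R := by
      intro z hz
      simp only [Finset.mem_insert, Finset.mem_singleton] at hz
      rcases hz with rfl | rfl | rfl <;> assumption
    by_cases h4 : 4 ≤ R.card
    · obtain ⟨e, he, hav⟩ := hex
      exact ⟨e, he, hav, Or.inr (Or.inr (Or.inr h4))⟩
    have hReq : ({p, q, r} : Finset α) = R := Finset.eq_of_subset_of_card_le hsub (by omega)
    have hR3 : 3 ≤ R.card := by rw [← hReq, h3c]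
    rw [← hReq] at hex
    have hgv : g (p, q, r) = hex.choose := by
      simp only [hg]
      rw [dif_pos hex]
    have hge := hex.choose_spec
    rw [← hgv] at hge
    refine ⟨g (p, q, r), hge.1, ?_, ?_⟩
    · rw [← hReq]; exact hge.2
    · by_cases hgY : g (p, q, r) ∈ Y
      · refine Or.inr (Or.inr (Or.inl ⟨hQ0Q (Finset.mem_inter.2 ⟨?_, hgY⟩), hR3⟩))
        exact Finset.mem_image_of_mem _ (by simp only [Finset.mem_product]; exact ⟨hp, hq, hr⟩)
      · have : g (p, q, r) ∈ A ∪ B := by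
          by_contra hno
          exact hgY (Finset.mem_sdiff.2 ⟨hge.1, hno⟩)
        rcases Finset.mem_union.1 this with h5 | h5
        · exact Or.inl ⟨h5, by omega⟩
        · exact Or.inr (Or.inl ⟨h5, by omega⟩)
  · have : (0 : ℝ) < wN := by exact_mod_cast (by omega : 0 < wN)
    push_cast
    have h1 : (wN : ℝ) / (8 * wN) = 1 / 8 := by field_simp
    rw [h1]
    norm_num
  · have hkR : (6 : ℝ) ≤ Fintype.card α := by exact_mod_cast hk6
    set K : ℝ := (Fintype.card α : ℝ) with hK
    have hK0 : 0 < K := by linarith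
    have hw : (wN : ℝ) = (K * (K - 1) - 22) / 2 := by linarith
    push_cast
    rw [hw]
    have h1 : 2 * ((4 : ℝ) - 1) / K ^ 1 + 1 * ((8 : ℝ) - 1) / K ^ 2 + 8 * ((32 : ℝ) - 1) / K ^ 3
        + (K * (K - 1) - 22) / 2 * (8 * ((K * (K - 1) - 22) / 2) - 1) / K ^ 4
        = (6 * K ^ 3 + 7 * K ^ 2 + 248 * K
          + (K * (K - 1) - 22) / 2 * (8 * ((K * (K - 1) - 22) / 2) - 1)) / K ^ 4 := by
      field_simp
      ring
    rw [h1, div_le_iff₀ (by positivity)]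
    obtain ⟨j, hj⟩ : ∃ j, K = 6 + j := ⟨K - 6, by ring⟩
    have hj0 : 0 ≤ j := by linarith
    rw [hj]
    have : 0 ≤ j ^ 2 := by positivity
    have : 0 ≤ j ^ 3 := by positivity
    have : 0 ≤ j ^ 4 := by positivity
    nlinarith
  · have := inv_n hn64
    norm_num at this ⊢
    linarith

end Cases

section Cases2

theorem twin_swap {α : Type*} [DecidableEq α] (F : SimpleGraph α) (u v : α)
    (h : ∀ w, w ≠ u → w ≠ v → (F.Adj u w ↔ F.Adj v w)) (p q : α) (hpq : F.Adj p q) :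
    F.Adj (Equiv.swap u v p) (Equiv.swap u v q) := by
  have hne := hpq.ne
  by_cases hpu : p = u
  · subst hpu
    rw [Equiv.swap_apply_left]
    by_cases hqv : q = v
    · subst hqv
      rw [Equiv.swap_apply_right]; exact hpq.symm
    · rw [Equiv.swap_apply_of_ne_of_ne hne.symm hqv]
      exact (h q hne.symm hqv).1 hpq
  · by_cases hpv : p = v
    · subst hpv
      rw [Equiv.swap_apply_right]
      by_cases hqu : q = u
      · subst hqu
        rw [Equiv.swap_apply_left]; exact hpq.symm
      · rw [Equiv.swap_apply_of_ne_of_ne hqu hne.symm]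
        exact (h q hqu hne.symm).2 hpq
    · rw [Equiv.swap_apply_of_ne_of_ne hpu hpv]
      by_cases hqu : q = u
      · subst hqu
        rw [Equiv.swap_apply_left]
        exact ((h p hpu hpv).1 hpq.symm).symm
      · by_cases hqv : q = v
        · subst hqv
          rw [Equiv.swap_apply_right]
          exact ((h p hpu hpv).2 hpq.symm).symm
        · rw [Equiv.swap_apply_of_ne_of_ne hqu hqv]
          exact hpq

theorem n_gt_k {k n : ℕ} (hk : 1 ≤ k) (h : k ^ (k + 2) < n ^ 2) : k < n := by
  have h1 : k ^ 2 ≤ k ^ (k + 2) := Nat.pow_le_pow_right hk (by omega)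
  exact lt_of_pow_lt_pow_left₀ 2 (by omega) (by omega)

open Classical in
set_option maxHeartbeats 1000000 in
theorem case_star {α β : Type*} [Fintype α] [Fintype β]
    (F : SimpleGraph α) (G : SimpleGraph β) (ε : ℝ) (hε : 0 < ε)
    (h : FarFromFree F G ε)
    (hbig : Fintype.card α ^ (Fintype.card α + 2) < Fintype.card β ^ 2)
    (a b : α) (hab : F.Adj a b) (hst : ∀ u v, F.Adj u v → u = a ∨ v = a) :
    Concl F G (ε / (Fintype.card α : ℝ) ^ (Fintype.card α)) := by
  set N := F.neighborFinset a with hN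
  have hE : F.edgeFinset = N.image (fun v => s(a, v)) := by
    ext e
    induction e with
    | _ u v =>
    simp only [SimpleGraph.mem_edgeFinset, SimpleGraph.mem_edgeSet, Finset.mem_image, hN,
      SimpleGraph.mem_neighborFinset]
    constructor
    · intro huv
      rcases hst u v huv with rfl | rfl
      · exact ⟨v, huv, rfl⟩
      · exact ⟨u, huv.symm, Sym2.eq_swap⟩
    · rintro ⟨w, hw, heq⟩
      rw [Sym2.eq_iff] at heq
      rcases heq with ⟨rfl, rfl⟩ | ⟨rfl, rfl⟩
      · exact hw
      · exact hw.symm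
  have hEc : F.edgeFinset.card = N.card := by
    rw [hE, Finset.card_image_of_injective]
    intro u v huv
    exact Sym2.congr_right.1 huv
  set m := N.card with hm
  have hm1 : 1 ≤ m := Finset.card_pos.2 ⟨b, by simp [hN, hab]⟩
  have hmk : m + 1 ≤ Fintype.card α := by
    have : a ∉ N := by simp [hN]
    rw [hm, ← Finset.card_insert_of_notMem this]
    exact Finset.card_le_univ _
  have hkn := n_gt_k (by omega) hbig
  have hmR : (1 : ℝ) ≤ m := by exact_mod_cast hm1
  have hkR : (m : ℝ) + 1 ≤ Fintype.card α := by exact_mod_cast hmk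
  have hnR : (m : ℝ) ≤ Fintype.card β := by exact_mod_cast (by omega : m ≤ Fintype.card β)
  have hNB : NB F (1 / (4 * m)) := by
    intro w hw C hC hh
    have h1 : (m : ℝ) * C ≤ w a * ∑ v ∈ N, w v := by
      rw [Finset.mul_sum, ← nsmul_eq_mul]
      apply Finset.card_nsmul_le_sum
      intro v hv
      exact hh a v (by simpa [hN] using hv)
    have h2 := sum_ge_subset w hw (insert a N)
    rw [Finset.sum_insert (by simp [hN])] at h2
    have h3 : 0 ≤ ∑ v ∈ N, w v := Finset.sum_nonneg (fun v _ => hw v)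
    have h4 := hw a
    rw [div_mul_eq_mul_div, le_div_iff₀ (by positivity)]
    nlinarith [sq_nonneg (w a - ∑ v ∈ N, w v)]
  have hnu : (0 : ℝ) < 1 / (4 * m) := by positivity
  have hn4 : 1 / (4 * (Fintype.card β : ℝ)) ≤ 1 / (4 * m) := by
    apply one_div_le_one_div_of_le (by positivity)
    linarith
  rcases Nat.lt_or_ge m 2 with hlt | hge
  · have hm1' : m = 1 := by omega
    refine ml_levels F G ε hε ⟨s(a, b), by simpa using hab⟩ h (by omega) _ hnu hNB
      F.edgeFinset ∅ ∅ 1 1 1 1 1 1 1 1 le_rfl le_rfl le_rfl one_pos one_pos one_pos one_pos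
      1 0 0 0 ?_ (by simp) (by simp) (by simp) 0 le_rfl ?_ (by simp) (by simp) ?_
    · rw [hEc, hm1']; simp
    · rintro R hR ⟨e, he, hav⟩
      exact ⟨e, he, hav, Or.inl ⟨he, hR.card_pos⟩⟩
    · have h2n : (2 : ℝ) ≤ Fintype.card β := by exact_mod_cast (by omega : 2 ≤ Fintype.card β)
      rw [hm1'] at hn4 ⊢
      norm_num at hn4 ⊢
      linarith
  · obtain ⟨u, hu, v, hv, huv⟩ := Finset.one_lt_card.1 (by omega : 1 < N.card)
    have hu' : F.Adj a u := by simpa [hN] using hu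
    have hv' : F.Adj a v := by simpa [hN] using hv
    have hm2 : (2 : ℝ) ≤ m := by exact_mod_cast hge
    have hne : s(a, u) ≠ s(a, v) := fun hh => huv (Sym2.congr_right.1 hh)
    refine ml_levels F G ε hε ⟨s(a, b), by simpa using hab⟩ h (by omega) _ hnu hNB
      {s(a, u), s(a, v)} ∅ ∅ 1 1 1 2 m 1 1 m le_rfl le_rfl (by norm_num) (by omega) one_pos one_pos
      (by omega) 2 0 0 ((m : ℝ) - 2) ?_ (by simp) (by simp) ?_
      (3 * m * (m - 1) / (m + 1) ^ 2) ?_ ?_ ?_ ?_ ?_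
    · exact_mod_cast Finset.card_le_two
    · rw [Finset.union_empty, Finset.union_empty, Finset.card_sdiff_of_subset, hEc,
        Finset.card_pair hne, Nat.cast_sub hge]
      · simp
      · intro e he
        simp only [Finset.mem_insert, Finset.mem_singleton] at he
        rw [SimpleGraph.mem_edgeFinset]
        rcases he with rfl | rfl <;> simpa
    · apply div_nonneg _ (by positivity)
      nlinarith
    · rintro R hR ⟨e, he, hav⟩
      by_cases h2 : 2 ≤ R.card
      · exact ⟨e, he, hav, Or.inr (Or.inr (Or.inr h2))⟩
      · obtain ⟨r, rfl⟩ := Finset.card_eq_one.1 (by have := hR.card_pos; omega : R.card = 1)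
        have har : a ≠ r := by
          rw [hE, Finset.mem_image] at he
          obtain ⟨z, _, rfl⟩ := he
          have := hav a (by simp)
          simpa using this
        by_cases hur : u = r
        · refine ⟨s(a, v), by simpa using hv', ?_, Or.inl ⟨by simp, by simp⟩⟩
          intro z hz
          rcases Sym2.mem_iff.1 hz with rfl | rfl
          · simpa using har
          · rw [← hur]; simpa using huv.symm
        · refine ⟨s(a, u), by simpa using hu', ?_, Or.inl ⟨by simp, by simp⟩⟩
          intro z hz
          rcases Sym2.mem_iff.1 hz with rfl | rfl
          · simpa using har
          · simpa using hur
    · have : (2 : ℝ) / m + 0 / (1 : ℕ) + 0 / (1 : ℕ) + (m - 2) / m = 1 := by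
        field_simp
        ring
      rw [this]
    · set K : ℝ := (Fintype.card α : ℝ) with hK
      have h1 : 2 * ((m : ℝ) - 1) / K ^ 1 ≤ 2 * ((m : ℝ) - 1) / (m + 1) ^ 1 := by
        apply div_le_div_of_nonneg_left (by linarith) (by positivity)
        gcongr
      have h2 : ((m : ℝ) - 2) * ((m : ℝ) - 1) / K ^ 2
          ≤ ((m : ℝ) - 2) * ((m : ℝ) - 1) / (m + 1) ^ 2 := by
        apply div_le_div_of_nonneg_left _ (by positivity)
        · gcongr
        · apply mul_nonneg <;> linarith
      have h3 : 2 * ((m : ℝ) - 1) / (m + 1) ^ 1 + ((m : ℝ) - 2) * ((m : ℝ) - 1) / (m + 1) ^ 2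
          = 3 * m * (m - 1) / (m + 1) ^ 2 := by
        field_simp
        ring
      simp only [zero_mul, zero_div, add_zero]
      linarith
    · have h1 : 1 + 3 * (m : ℝ) * (m - 1) / (m + 1) ^ 2 = (4 * m ^ 2 - m + 1) / (m + 1) ^ 2 := by
        field_simp
        ring
      have h2 : (0 : ℝ) < 4 * m ^ 2 - m + 1 := by nlinarith
      rw [h1, one_div_div]
      have h3 : (1 : ℝ) / 4 + 1 / (4 * m) + 1 / (4 * m) ≤ (m + 1) ^ 2 / (4 * m ^ 2 - m + 1) := by
        have : (1 : ℝ) / 4 + 1 / (4 * m) + 1 / (4 * m) = (m + 2) / (4 * m) := by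
          field_simp
          ring
        rw [this, div_le_div_iff₀ (by positivity) h2]
        nlinarith
      linarith

open Classical in
theorem case_triangle {α β : Type*} [Fintype α] [Fintype β]
    (F : SimpleGraph α) (G : SimpleGraph β) (ε : ℝ) (hε : 0 < ε)
    (h : FarFromFree F G ε)
    (hbig : Fintype.card α ^ (Fintype.card α + 2) < Fintype.card β ^ 2)
    (a b x : α) (hab : F.Adj a b) (hax : F.Adj a x) (hbx : F.Adj b x)
    (hall : ∀ u v, F.Adj u v → u = a ∨ u = b ∨ u = x) :
    Concl F G (ε / (Fintype.card α : ℝ) ^ (Fintype.card α)) := by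
  have hk3 : 3 ≤ Fintype.card α := by
    have h1 : ({a, b, x} : Finset α).card = 3 := by
      rw [Finset.card_insert_of_notMem (by simp [hab.ne, hax.ne]), Finset.card_pair hbx.ne]
    rw [← h1]
    exact Finset.card_le_univ _
  have hkn := n_gt_k (by omega) hbig
  have hEs : F.edgeFinset ⊆ {s(a, b), s(a, x), s(b, x)} := by
    intro e
    induction e with
    | _ u v =>
    intro he
    rw [SimpleGraph.mem_edgeFinset, SimpleGraph.mem_edgeSet] at he
    have h1 := hall u v he
    have h2 := hall v u he.symm
    have h3 := he.ne
    simp only [Finset.mem_insert, Finset.mem_singleton, Sym2.eq_iff]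
    grind
  have hE3 : F.edgeFinset.card ≤ 3 := (Finset.card_le_card hEs).trans Finset.card_le_three
  have hE0 : 0 < F.edgeFinset.card := Finset.card_pos.2 ⟨s(a, b), by simpa using hab⟩
  have hcard : ({1, Equiv.swap a b} : Finset (Equiv.Perm α)).card = 2 := by
    apply Finset.card_pair
    intro hh
    have := congrArg (fun σ : Equiv.Perm α => σ a) hh
    simp at this
    exact hab.ne this
  refine tl_concl F G ε hε ⟨s(a, b), by simpa using hab⟩ h (by omega) (1 / 4) (by norm_num)
    (nb_one F a b hab) {1, Equiv.swap a b} ?_ ?_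
  · intro γ hγ p q hpq
    simp only [Finset.mem_insert, Finset.mem_singleton] at hγ
    rcases hγ with rfl | rfl
    · exact hpq
    · apply twin_swap F a b _ p q hpq
      intro w hwa hwb
      constructor
      · intro hw
        rcases hall w a hw.symm with rfl | rfl | rfl
        · exact absurd rfl hwa
        · exact absurd rfl hwb
        · exact hbx
      · intro hw
        rcases hall w b hw.symm with rfl | rfl | rfl
        · exact absurd rfl hwa
        · exact absurd rfl hwb
        · exact hax
  · rw [hcard]
    have h1 : (F.edgeFinset.card : ℝ) ≤ 3 := by exact_mod_cast hE3
    have h0 : (0 : ℝ) < F.edgeFinset.card := by exact_mod_cast hE0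
    have h2 : (3 : ℝ) ≤ Fintype.card β := by exact_mod_cast (by omega : 3 ≤ Fintype.card β)
    have h3 : 1 / (4 * (Fintype.card β : ℝ)) ≤ 1 / 12 := by
      apply one_div_le_one_div_of_le (by norm_num)
      linarith
    have h4 : (2 : ℝ) / 3 ≤ ((2 : ℕ) : ℝ) / F.edgeFinset.card := by
      rw [div_le_div_iff₀ (by norm_num) h0]
      push_cast
      linarith
    norm_num at h3 h4 ⊢
    linarith

open Classical in
theorem case_four {α β : Type*} [Fintype α] [Fintype β]
    (F : SimpleGraph α) (G : SimpleGraph β) (ε : ℝ) (hε : 0 < ε)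
    (h : FarFromFree F G ε)
    (hbig : Fintype.card α ^ (Fintype.card α + 2) < Fintype.card β ^ 2)
    (a b c d : α) (hab : F.Adj a b) (hcd : F.Adj c d)
    (hac : a ≠ c) (had : a ≠ d) (hbc : b ≠ c) (hbd : b ≠ d)
    (hall : ∀ u v, F.Adj u v → u = a ∨ u = b ∨ u = c ∨ u = d) :
    Concl F G (ε / (Fintype.card α : ℝ) ^ (Fintype.card α)) := by
  have hab' := hab.ne
  have hcd' := hcd.ne
  have hk4 : 4 ≤ Fintype.card α := by
    have h1 : ({a, b, c, d} : Finset α).card = 4 := by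
      repeat rw [Finset.card_insert_of_notMem (by simp [*])]
      simp
    rw [← h1]
    exact Finset.card_le_univ _
  have hn64 := n_large hk4 hbig
  have hinv := inv_n hn64
  have hEs : F.edgeFinset ⊆ {s(a, b), s(c, d), s(a, c), s(b, d), s(a, d), s(b, c)} := by
    intro e
    induction e with
    | _ u v =>
    intro he
    rw [SimpleGraph.mem_edgeFinset, SimpleGraph.mem_edgeSet] at he
    have h1 := hall u v he
    have h2 := hall v u he.symm
    have h3 := he.ne
    simp only [Finset.mem_insert, Finset.mem_singleton, Sym2.eq_iff]
    grind
  have hE0 : 0 < F.edgeFinset.card := Finset.card_pos.2 ⟨s(a, b), by simpa using hab⟩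
  have hNB := nb_two F a b c d hab hcd hac had hbc hbd
  by_cases hE5 : 5 ≤ F.edgeFinset.card
  · have hE6 : F.edgeFinset.card ≤ 6 := (Finset.card_le_card hEs).trans Finset.card_le_six
    have hex : ∃ u v, u ≠ v ∧ ∀ w, w ≠ u → w ≠ v → (F.Adj u w ↔ F.Adj v w) := by
      by_cases h1 : F.Adj a d ∧ F.Adj b c
      · refine ⟨a, c, hac, ?_⟩
        intro w hwa hwc
        constructor
        · intro hw
          rcases hall w a hw.symm with rfl | rfl | rfl | rfl
          · exact absurd rfl hwa
          · exact h1.2.symm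
          · exact absurd rfl hwc
          · exact hcd
        · intro hw
          rcases hall w c hw.symm with rfl | rfl | rfl | rfl
          · exact absurd rfl hwa
          · exact hab
          · exact absurd rfl hwc
          · exact h1.1
      · have key : ∀ e1 e2 : Sym2 α, e1 ∉ F.edgeFinset → e2 ∉ F.edgeFinset →
            e1 ∈ ({s(a, b), s(c, d), s(a, c), s(b, d), s(a, d), s(b, c)} : Finset (Sym2 α)) →
            e2 ∈ ({s(a, b), s(c, d), s(a, c), s(b, d), s(a, d), s(b, c)} : Finset (Sym2 α)) →
            e1 = e2 := by
          intro e1 e2 h1 h2 h3 h4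
          by_contra hne
          have h5 : insert e1 (insert e2 F.edgeFinset) ⊆
              ({s(a, b), s(c, d), s(a, c), s(b, d), s(a, d), s(b, c)} : Finset (Sym2 α)) :=
            Finset.insert_subset h3 (Finset.insert_subset h4 hEs)
          have h6 := (Finset.card_le_card h5).trans Finset.card_le_six
          rw [Finset.card_insert_of_notMem (by simp only [Finset.mem_insert]; tauto),
            Finset.card_insert_of_notMem h2] at h6
          omega
        have hnot : ∀ u v, ¬ F.Adj u v → s(u, v) ∉ F.edgeFinset := by
          intro u v huv
          simpa using huv
        have h2 : F.Adj a c ∧ F.Adj b d := by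
          by_contra hno
          rw [not_and_or] at h1 hno
          rcases h1 with h1 | h1 <;> rcases hno with hno | hno <;>
            · have := key _ _ (hnot _ _ h1) (hnot _ _ hno) (by simp) (by simp)
              rw [Sym2.eq_iff] at this
              grind
        refine ⟨a, d, had, ?_⟩
        intro w hwa hwd
        constructor
        · intro hw
          rcases hall w a hw.symm with rfl | rfl | rfl | rfl
          · exact absurd rfl hwa
          · exact h2.2.symm
          · exact hcd.symm
          · exact absurd rfl hwd
        · intro hw
          rcases hall w d hw.symm with rfl | rfl | rfl | rfl
          · exact absurd rfl hwa
          · exact hab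
          · exact h2.1
          · exact absurd rfl hwd
    obtain ⟨u, v, huv, htw⟩ := hex
    have hcard : ({1, Equiv.swap u v} : Finset (Equiv.Perm α)).card = 2 := by
      apply Finset.card_pair
      intro hh
      have := congrArg (fun σ : Equiv.Perm α => σ u) hh
      simp at this
      exact huv this
    refine tl_concl F G ε hε ⟨s(a, b), by simpa using hab⟩ h (by omega) (1 / 16) (by norm_num)
      hNB {1, Equiv.swap u v} ?_ ?_
    · intro γ hγ p q hpq
      simp only [Finset.mem_insert, Finset.mem_singleton] at hγ
      rcases hγ with rfl | rfl
      · exact hpq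
      · exact twin_swap F u v htw p q hpq
    · rw [hcard]
      have h1 : (F.edgeFinset.card : ℝ) ≤ 6 := by exact_mod_cast hE6
      have h0 : (0 : ℝ) < F.edgeFinset.card := by exact_mod_cast hE0
      have h4 : (2 : ℝ) / 6 ≤ ((2 : ℕ) : ℝ) / F.edgeFinset.card := by
        rw [div_le_div_iff₀ (by norm_num) h0]
        push_cast
        linarith
      norm_num at hinv h4 ⊢
      linarith
  · have hne : s(a, b) ≠ s(c, d) := by simp [*]
    refine ml_levels F G ε hε ⟨s(a, b), by simpa using hab⟩ h (by omega) (1 / 16) (by norm_num) hNB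
      {s(a, b), s(c, d)} ∅ ∅ 1 1 1 2 4 1 1 4 le_rfl le_rfl (by norm_num) (by norm_num) one_pos
      one_pos (by norm_num) 2 0 0 2 ?_ (by simp) (by simp) ?_ (15 / 8) (by norm_num) ?_ ?_ ?_ ?_
    · exact_mod_cast Finset.card_le_two
    · rw [Finset.union_empty, Finset.union_empty, Finset.card_sdiff_of_subset,
        Finset.card_pair hne]
      · exact_mod_cast (by omega : F.edgeFinset.card - 2 ≤ 2)
      · intro e he
        simp only [Finset.mem_insert, Finset.mem_singleton] at he
        rw [SimpleGraph.mem_edgeFinset]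
        rcases he with rfl | rfl <;> simpa
    · rintro R hR ⟨e, he, hav⟩
      by_cases h2 : 2 ≤ R.card
      · exact ⟨e, he, hav, Or.inr (Or.inr (Or.inr h2))⟩
      · obtain ⟨r, rfl⟩ := Finset.card_eq_one.1 (by have := hR.card_pos; omega : R.card = 1)
        by_cases hr : a = r ∨ b = r
        · refine ⟨s(c, d), by simpa using hcd, ?_, Or.inl ⟨by simp, by simp⟩⟩
          intro z hz
          rw [Finset.mem_singleton]
          rcases Sym2.mem_iff.1 hz with rfl | rfl <;> grind
        · refine ⟨s(a, b), by simpa using hab, ?_, Or.inl ⟨by simp, by simp⟩⟩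
          intro z hz
          rw [Finset.mem_singleton]
          rcases Sym2.mem_iff.1 hz with rfl | rfl <;> grind
    · norm_num
    · have hkR : (4 : ℝ) ≤ Fintype.card α := by exact_mod_cast hk4
      set K : ℝ := (Fintype.card α : ℝ) with hK
      have hK0 : 0 < K := by linarith
      have h1 : (6 : ℝ) / K ≤ 6 / 4 := by gcongr
      have h2 : (6 : ℝ) / K ^ 2 ≤ 6 / 4 ^ 2 := by gcongr
      norm_num at h1 h2 ⊢
      linarith
    · norm_num at hinv ⊢
      linarith

end Cases2

section Cases3

theorem exists_avoid {α : Type*} [Fintype α] [DecidableEq α] (S : Finset α)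
    (h : S.card < Fintype.card α) : ∃ r, r ∉ S := by
  by_contra hno
  push Not at hno
  have : S = Finset.univ := Finset.eq_univ_iff_forall.2 hno
  rw [this, Finset.card_univ] at h
  exact lt_irrefl _ h

open Classical in
theorem twins_five {α : Type*} [Fintype α] (F : SimpleGraph α)
    (hk : Fintype.card α = 5) (he : 8 ≤ F.edgeFinset.card) :
    ∃ u v p q : α, u ≠ v ∧ p ≠ q ∧ u ≠ p ∧ u ≠ q ∧ v ≠ p ∧ v ≠ q ∧
      (∀ w, w ≠ u → w ≠ v → (F.Adj u w ↔ F.Adj v w)) ∧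
      (∀ w, w ≠ p → w ≠ q → (F.Adj p w ↔ F.Adj q w)) := by
  have hcompl : Fᶜ.edgeFinset.card ≤ 2 := by
    have h1 : F.edgeFinset.card + Fᶜ.edgeFinset.card ≤ (Fintype.card α).choose 2 := by
      have hd : Disjoint F.edgeFinset Fᶜ.edgeFinset := by
        rw [SimpleGraph.disjoint_edgeFinset]
        exact disjoint_compl_right
      rw [← Finset.card_union_of_disjoint hd, ← SimpleGraph.edgeFinset_sup]
      exact SimpleGraph.card_edgeFinset_le_card_choose_two
    rw [hk] at h1
    have : Nat.choose 5 2 = 10 := rfl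
    omega
  have key : ∀ e1 e2 e3, e1 ∈ Fᶜ.edgeFinset → e2 ∈ Fᶜ.edgeFinset → e3 ∈ Fᶜ.edgeFinset →
      e1 ≠ e2 → e3 = e1 ∨ e3 = e2 := by
    intro e1 e2 e3 h1 h2 h3 h12
    by_contra hno
    push Not at hno
    have h5 : ({e3, e1, e2} : Finset (Sym2 α)) ⊆ Fᶜ.edgeFinset := by
      intro z hz
      simp only [Finset.mem_insert, Finset.mem_singleton] at hz
      rcases hz with rfl | rfl | rfl <;> assumption
    have h6 := Finset.card_le_card h5
    rw [Finset.card_insert_of_notMem (by simp [hno]), Finset.card_pair h12] at h6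
    omega
  have hmem : ∀ u v, u ≠ v → ¬ F.Adj u v → s(u, v) ∈ Fᶜ.edgeFinset := by
    intro u v huv hn
    simp [huv, hn]
  have two : ∀ S : Finset α, S.card ≤ 3 → ∃ p q, p ≠ q ∧ p ∉ S ∧ q ∉ S := by
    intro S hS
    obtain ⟨p, hp⟩ := exists_avoid S (by omega)
    obtain ⟨q, hq⟩ := exists_avoid (insert p S)
      (by have := Finset.card_insert_le p S; omega)
    refine ⟨p, q, ?_, hp, ?_⟩
    · rintro rfl; simp at hq
    · intro hh; exact hq (Finset.mem_insert_of_mem hh)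
  by_cases h0 : ∃ u v, u ≠ v ∧ ¬ F.Adj u v
  · obtain ⟨u, v, huv, hnuv⟩ := h0
    by_cases h1 : ∃ p q, p ≠ q ∧ ¬ F.Adj p q ∧ s(u, v) ≠ s(p, q)
    · obtain ⟨p, q, hpq, hnpq, hne⟩ := h1
      have hall : ∀ r s, r ≠ s → ¬ F.Adj r s → s(r, s) = s(u, v) ∨ s(r, s) = s(p, q) :=
        fun r s hrs hn => key _ _ _ (hmem _ _ huv hnuv) (hmem _ _ hpq hnpq) (hmem _ _ hrs hn) hne
      simp only [Sym2.eq_iff] at hall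
      have shared : ∀ c y z, c ≠ y → c ≠ z → y ≠ z → ¬ F.Adj c y → ¬ F.Adj c z →
          (∀ r s, r ≠ s → ¬ F.Adj r s → ((r = c ∧ s = y) ∨ (r = y ∧ s = c)) ∨
            ((r = c ∧ s = z) ∨ (r = z ∧ s = c))) →
          ∃ u v p q : α, u ≠ v ∧ p ≠ q ∧ u ≠ p ∧ u ≠ q ∧ v ≠ p ∧ v ≠ q ∧
            (∀ w, w ≠ u → w ≠ v → (F.Adj u w ↔ F.Adj v w)) ∧
            (∀ w, w ≠ p → w ≠ q → (F.Adj p w ↔ F.Adj q w)) := by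
        intro c y z hcy hcz hyz h1 h2 hal
        obtain ⟨p, q, hpq, hp, hq⟩ := two {c, y, z} Finset.card_le_three
        simp only [Finset.mem_insert, Finset.mem_singleton, not_or] at hp hq
        refine ⟨y, z, p, q, hyz, hpq, ?_, ?_, ?_, ?_, ?_, ?_⟩
        any_goals grind
        · intro w h3 h4
          have h1' : ¬ F.Adj y c := fun hh => h1 hh.symm
          have h2' : ¬ F.Adj z c := fun hh => h2 hh.symm
          by_cases hw : w = c
          · subst hw; tauto
          · have := hal y w; have := hal z w; grind
      by_cases hup : u = p
      · subst hup
        exact shared u v q huv hpq (by rintro rfl; exact hne rfl) hnuv hnpq (by grind)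
      by_cases huq : u = q
      · subst huq
        exact shared u v p huv hpq.symm (by rintro rfl; exact hne Sym2.eq_swap) hnuv
          (fun hh => hnpq hh.symm) (by grind)
      by_cases hvp : v = p
      · subst hvp
        exact shared v u q huv.symm hpq huq (fun hh => hnuv hh.symm) hnpq (by grind)
      by_cases hvq : v = q
      · subst hvq
        exact shared v u p huv.symm hpq.symm hup (fun hh => hnuv hh.symm)
          (fun hh => hnpq hh.symm) (by grind)
      refine ⟨u, v, p, q, huv, hpq, hup, huq, hvp, hvq, ?_, ?_⟩
      · intro w h3 h4
        have := hall u w; have := hall v w; grind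
      · intro w h3 h4
        have := hall p w; have := hall q w; grind
    · push Not at h1
      simp only [ne_eq, Sym2.eq_iff] at h1
      obtain ⟨p, q, hpq, hp, hq⟩ := two {u, v} (Finset.card_le_two.trans (by norm_num))
      simp only [Finset.mem_insert, Finset.mem_singleton, not_or] at hp hq
      refine ⟨u, v, p, q, huv, hpq, ?_, ?_, ?_, ?_, ?_, ?_⟩
      any_goals grind
  · push Not at h0
    obtain ⟨u, v, huv, _⟩ := two ∅ (by simp)
    obtain ⟨p, q, hpq, hp, hq⟩ := two {u, v} (Finset.card_le_two.trans (by norm_num))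
    simp only [Finset.mem_insert, Finset.mem_singleton, not_or] at hp hq
    refine ⟨u, v, p, q, huv, hpq, ?_, ?_, ?_, ?_, ?_, ?_⟩
    any_goals grind

open Classical in
theorem case_five {α β : Type*} [Fintype α] [Fintype β]
    (F : SimpleGraph α) (G : SimpleGraph β) (ε : ℝ) (hε : 0 < ε)
    (h : FarFromFree F G ε)
    (hbig : Fintype.card α ^ (Fintype.card α + 2) < Fintype.card β ^ 2)
    (a b c d : α) (hab : F.Adj a b) (hcd : F.Adj c d)
    (hac : a ≠ c) (had : a ≠ d) (hbc : b ≠ c) (hbd : b ≠ d)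
    (hk : Fintype.card α = 5) (he : 8 ≤ F.edgeFinset.card) :
    Concl F G (ε / (Fintype.card α : ℝ) ^ (Fintype.card α)) := by
  have hn64 := n_large (by omega) hbig
  have hinv := inv_n hn64
  obtain ⟨u, v, p, q, huv, hpq, hup, huq, hvp, hvq, t1, t2⟩ := twins_five F hk he
  have he10 : F.edgeFinset.card ≤ 10 := by
    have h1 := SimpleGraph.card_edgeFinset_le_card_choose_two (G := F)
    rw [hk] at h1
    exact h1
  have hcard : 4 ≤ ({1, Equiv.swap u v, Equiv.swap p q, Equiv.swap u v * Equiv.swap p q} :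
      Finset (Equiv.Perm α)).card := by
    have h1 : ({(u, p), (v, p), (u, q), (v, q)} : Finset (α × α)).card = 4 := by
      repeat rw [Finset.card_insert_of_notMem (by simp [*, huv.symm])]
      simp
    have h2 : ({(u, p), (v, p), (u, q), (v, q)} : Finset (α × α)) ⊆
        ({1, Equiv.swap u v, Equiv.swap p q, Equiv.swap u v * Equiv.swap p q} :
          Finset (Equiv.Perm α)).image (fun σ => (σ u, σ p)) := by
      simp [Finset.image_insert, Equiv.swap_apply_of_ne_of_ne, *, hup.symm, huq.symm, hvp.symm,
        hvq.symm]
    rw [← h1]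
    exact (Finset.card_le_card h2).trans Finset.card_image_le
  refine tl_concl F G ε hε ⟨s(a, b), by simpa using hab⟩ h (by omega) (1 / 16) (by norm_num)
    (nb_two F a b c d hab hcd hac had hbc hbd)
    {1, Equiv.swap u v, Equiv.swap p q, Equiv.swap u v * Equiv.swap p q} ?_ ?_
  · intro γ hγ r s hrs
    simp only [Finset.mem_insert, Finset.mem_singleton] at hγ
    rcases hγ with rfl | rfl | rfl | rfl
    · exact hrs
    · exact twin_swap F u v t1 r s hrs
    · exact twin_swap F p q t2 r s hrs
    · exact twin_swap F u v t1 _ _ (twin_swap F p q t2 r s hrs)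
  · have h1 : (F.edgeFinset.card : ℝ) ≤ 10 := by exact_mod_cast he10
    have h0 : (0 : ℝ) < F.edgeFinset.card := by exact_mod_cast (by omega : 0 < F.edgeFinset.card)
    refine le_trans ?_ (div_le_div_of_nonneg_right
      (show (4 : ℝ) ≤ _ by exact_mod_cast hcard) h0.le)
    have h4 : (4 : ℝ) / 10 ≤ 4 / F.edgeFinset.card := by
      rw [div_le_div_iff₀ (by norm_num) h0]
      linarith
    norm_num at hinv h4 ⊢
    linarith

theorem pair_count {α : Type*} [DecidableEq α] (I N1 N2 : Finset α) (h1 : N1 ⊆ I) (h2 : N2 ⊆ I)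
    (h : ∀ y ∈ N1, ∀ z ∈ N2, y = z) (hI : 2 ≤ I.card) : N1.card + N2.card ≤ I.card := by
  have h1' := Finset.card_le_card h1
  have h2' := Finset.card_le_card h2
  rcases N1.eq_empty_or_nonempty with rfl | ⟨y, hy⟩
  · simpa using h2'
  rcases N2.eq_empty_or_nonempty with rfl | ⟨z, hz⟩
  · simpa using h1'
  have h3 : N1.card ≤ 1 := Finset.card_le_one.2 (fun p hp q hq => (h p hp z hz).trans (h q hq z hz).symm)
  have h4 : N2.card ≤ 1 := Finset.card_le_one.2 (fun p hp q hq => (h y hy p hp).symm.trans (h y hy q hq))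
  omega

open Classical in
theorem edge_count {α : Type*} [Fintype α] (F : SimpleGraph α) (a b c d : α)
    (hab' : a ≠ b) (hcd' : c ≠ d)
    (hac : a ≠ c) (had : a ≠ d) (hbc : b ≠ c) (hbd : b ≠ d)
    (hk : 6 ≤ Fintype.card α)
    (hI : ∀ u v, F.Adj u v → u ∈ ({a, b, c, d} : Finset α) ∨ v ∈ ({a, b, c, d} : Finset α))
    (h1 : ∀ y z, y ∉ ({a, b, c, d} : Finset α) → z ∉ ({a, b, c, d} : Finset α) →
      F.Adj a y → F.Adj b z → y = z)
    (h2 : ∀ y z, y ∉ ({a, b, c, d} : Finset α) → z ∉ ({a, b, c, d} : Finset α) →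
      F.Adj c y → F.Adj d z → y = z) :
    F.edgeFinset.card ≤ 2 * Fintype.card α - 2 := by
  have h4 : ({a, b, c, d} : Finset α).card = 4 := by
    repeat rw [Finset.card_insert_of_notMem (by simp [*])]
    simp
  set I : Finset α := ({a, b, c, d} : Finset α)ᶜ with hIdef
  have hIc : I.card = Fintype.card α - 4 := by rw [hIdef, Finset.card_compl, h4]
  set N : α → Finset α := fun u => I.filter (fun y => F.Adj u y) with hN
  have hc1 := pair_count I (N a) (N b) (Finset.filter_subset _ _) (Finset.filter_subset _ _)
    (fun y hy z hz => by
      simp only [hN, Finset.mem_filter, hIdef, Finset.mem_compl] at hy hz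
      exact h1 y z hy.1 hz.1 hy.2 hz.2) (by omega)
  have hc2 := pair_count I (N c) (N d) (Finset.filter_subset _ _) (Finset.filter_subset _ _)
    (fun y hy z hz => by
      simp only [hN, Finset.mem_filter, hIdef, Finset.mem_compl] at hy hz
      exact h2 y z hy.1 hz.1 hy.2 hz.2) (by omega)
  set im : α → Finset (Sym2 α) := fun u => (N u).image (fun v => s(u, v)) with him
  have himc : ∀ u, (im u).card ≤ (N u).card := fun u => Finset.card_image_le
  have himm : ∀ u v, F.Adj u v → v ∉ ({a, b, c, d} : Finset α) → s(u, v) ∈ im u := by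
    intro u v huv hv
    exact Finset.mem_image.2 ⟨v, by simp only [hN, Finset.mem_filter, hIdef, Finset.mem_compl]; exact ⟨hv, huv⟩, rfl⟩
  have hsub : F.edgeFinset ⊆ ({s(a, b), s(c, d), s(a, c), s(b, d), s(a, d), s(b, c)} :
      Finset (Sym2 α)) ∪ (im a ∪ im b ∪ (im c ∪ im d)) := by
    have out : ∀ u v, F.Adj u v → u ∈ ({a, b, c, d} : Finset α) → v ∉ ({a, b, c, d} : Finset α) →
        s(u, v) ∈ im a ∪ im b ∪ (im c ∪ im d) := by
      intro u v huv hu hv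
      have := himm u v huv hv
      simp only [Finset.mem_insert, Finset.mem_singleton] at hu
      simp only [Finset.mem_union]
      rcases hu with rfl | rfl | rfl | rfl <;> tauto
    intro e
    induction e with
    | _ u v =>
    intro he
    rw [SimpleGraph.mem_edgeFinset, SimpleGraph.mem_edgeSet] at he
    rw [Finset.mem_union]
    by_cases hu : u ∈ ({a, b, c, d} : Finset α)
    · by_cases hv : v ∈ ({a, b, c, d} : Finset α)
      · left
        have h3 := he.ne
        simp only [Finset.mem_insert, Finset.mem_singleton, Sym2.eq_iff] at hu hv ⊢
        grind
      · exact Or.inr (out u v he hu hv)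
    · right
      rw [Sym2.eq_swap]
      exact out v u he.symm ((hI u v he).resolve_left hu) hu
  have h5 := Finset.card_le_card hsub
  have h6 : ({s(a, b), s(c, d), s(a, c), s(b, d), s(a, d), s(b, c)} : Finset (Sym2 α)).card ≤ 6 :=
    Finset.card_le_six
  have h7 := Finset.card_union_le ({s(a, b), s(c, d), s(a, c), s(b, d), s(a, d), s(b, c)} :
      Finset (Sym2 α)) (im a ∪ im b ∪ (im c ∪ im d))
  have h8 := Finset.card_union_le (im a ∪ im b) (im c ∪ im d)
  have h9 := Finset.card_union_le (im a) (im b)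
  have h10 := Finset.card_union_le (im c) (im d)
  have := himc a
  have := himc b
  have := himc c
  have := himc d
  omega

open Classical in
set_option maxHeartbeats 1000000 in
theorem case_path {α β : Type*} [Fintype α] [Fintype β]
    (F : SimpleGraph α) (G : SimpleGraph β) (ε : ℝ) (hε : 0 < ε)
    (h : FarFromFree F G ε)
    (hbig : Fintype.card α ^ (Fintype.card α + 2) < Fintype.card β ^ 2)
    (a b c d x : α) (hab : F.Adj a b) (hcd : F.Adj c d) (hax : F.Adj a x)
    (hac : a ≠ c) (had : a ≠ d) (hbc : b ≠ c) (hbd : b ≠ d)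
    (hbx : b ≠ x) (hcx : c ≠ x) (hdx : d ≠ x)
    (hI : ∀ u v, F.Adj u v → u ∈ ({a, b, c, d} : Finset α) ∨ v ∈ ({a, b, c, d} : Finset α))
    (h1 : ∀ y z, y ∉ ({a, b, c, d} : Finset α) → z ∉ ({a, b, c, d} : Finset α) →
      F.Adj a y → F.Adj b z → y = z)
    (h2 : ∀ y z, y ∉ ({a, b, c, d} : Finset α) → z ∉ ({a, b, c, d} : Finset α) →
      F.Adj c y → F.Adj d z → y = z) :
    Concl F G (ε / (Fintype.card α : ℝ) ^ (Fintype.card α)) := by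
  have hab' := hab.ne
  have hcd' := hcd.ne
  have hax' := hax.ne
  have hk5 : 5 ≤ Fintype.card α := by
    have h1 : ({a, b, c, d, x} : Finset α).card = 5 := by
      repeat rw [Finset.card_insert_of_notMem (by simp [*])]
      simp
    rw [← h1]
    exact Finset.card_le_univ _
  by_cases h58 : Fintype.card α = 5 ∧ 8 ≤ F.edgeFinset.card
  · exact case_five F G ε hε h hbig a b c d hab hcd hac had hbc hbd h58.1 h58.2
  have hn64 := n_large (by omega) hbig
  have hinv := inv_n hn64
  have hNB := nb_path F a b c d x hab hcd hax hac had hbc hbd hbx hcx hdx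
  set A : Finset (Sym2 α) := {s(a, b), s(c, d)} with hA
  set Y := F.edgeFinset \ A with hY
  have hAc : A.card = 2 := Finset.card_pair (by simp [*])
  have hAE : A ⊆ F.edgeFinset := by
    intro e he
    simp only [hA, Finset.mem_insert, Finset.mem_singleton] at he
    rw [SimpleGraph.mem_edgeFinset]
    rcases he with rfl | rfl <;> simpa
  have hYc : Y.card = F.edgeFinset.card - 2 := by
    rw [hY, Finset.card_sdiff_of_subset hAE, hAc]
  set g : α → Sym2 α := fun p =>
    if hh : ∃ e ∈ F.edgeFinset, ∀ z ∈ e, z ∉ ({a, p} : Finset α)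
    then hh.choose else s(a, b) with hg
  set Q0 : Finset (Sym2 α) := ({s(a, x), g c, g d} : Finset (Sym2 α)) ∩ Y with hQ0
  have hQ0c : Q0.card ≤ 3 :=
    (Finset.card_le_card Finset.inter_subset_left).trans Finset.card_le_three
  obtain ⟨Q, hQ0Q, hQY, hQc, hYQ⟩ := pad_lemma Q0 Y 3 hQ0c Finset.inter_subset_right
  have hrest : (F.edgeFinset \ (A ∪ ∅ ∪ Q)).card ≤ F.edgeFinset.card - 5 := by
    have h1 : F.edgeFinset \ (A ∪ ∅ ∪ Q) = Y \ Q := by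
      rw [Finset.union_empty, hY, sdiff_sdiff_left]; rfl
    rw [h1]
    omega
  have hP : ∀ R : Finset α, R.Nonempty → (∃ e ∈ F.edgeFinset, ∀ x ∈ e, x ∉ R) →
      ∃ e ∈ F.edgeFinset, (∀ x ∈ e, x ∉ R) ∧ ((e ∈ A ∧ 1 ≤ R.card) ∨
        (e ∈ (∅ : Finset (Sym2 α)) ∧ 1 ≤ R.card) ∨ (e ∈ Q ∧ 2 ≤ R.card) ∨ 3 ≤ R.card) := by
    intro R hR hex
    by_cases h1 : a ∉ R ∧ b ∉ R
    · refine ⟨s(a, b), by simpa using hab, ?_, Or.inl ⟨by simp [hA], hR.card_pos⟩⟩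
      intro z hz
      rcases Sym2.mem_iff.1 hz with rfl | rfl
      exacts [h1.1, h1.2]
    by_cases h2 : c ∉ R ∧ d ∉ R
    · refine ⟨s(c, d), by simpa using hcd, ?_, Or.inl ⟨by simp [hA], hR.card_pos⟩⟩
      intro z hz
      rcases Sym2.mem_iff.1 hz with rfl | rfl
      exacts [h2.1, h2.2]
    by_cases h4 : 3 ≤ R.card
    · obtain ⟨e, he, hav⟩ := hex
      exact ⟨e, he, hav, Or.inr (Or.inr (Or.inr h4))⟩
    have h1' : ∃ p ∈ ({a, b} : Finset α), p ∈ R := by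
      by_contra hno
      push Not at hno
      exact h1 ⟨hno a (by simp), hno b (by simp)⟩
    have h2' : ∃ p ∈ ({c, d} : Finset α), p ∈ R := by
      by_contra hno
      push Not at hno
      exact h2 ⟨hno c (by simp), hno d (by simp)⟩
    obtain ⟨p, hp, hpR⟩ := h1'
    obtain ⟨q, hq, hqR⟩ := h2'
    simp only [Finset.mem_insert, Finset.mem_singleton] at hp hq
    have hpq : p ≠ q := by
      rcases hp with rfl | rfl <;> rcases hq with rfl | rfl <;> assumption
    have hReq : ({p, q} : Finset α) = R := by
      apply Finset.eq_of_subset_of_card_le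
      · intro z hz
        simp only [Finset.mem_insert, Finset.mem_singleton] at hz
        rcases hz with rfl | rfl <;> assumption
      · rw [Finset.card_pair hpq]; omega
    have hR2 : R.card = 2 := by rw [← hReq, Finset.card_pair hpq]
    have fin : ∀ e ∈ F.edgeFinset, (∀ z ∈ e, z ∉ R) →
        e ∈ ({s(a, x), g c, g d} : Finset (Sym2 α)) →
        ∃ e ∈ F.edgeFinset, (∀ x ∈ e, x ∉ R) ∧ ((e ∈ A ∧ 1 ≤ R.card) ∨
        (e ∈ (∅ : Finset (Sym2 α)) ∧ 1 ≤ R.card) ∨ (e ∈ Q ∧ 2 ≤ R.card) ∨ 3 ≤ R.card) := by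
      intro e he hav hm
      refine ⟨e, he, hav, ?_⟩
      by_cases heA : e ∈ A
      · exact Or.inl ⟨heA, by omega⟩
      · exact Or.inr (Or.inr (Or.inl ⟨hQ0Q (Finset.mem_inter.2
          ⟨hm, Finset.mem_sdiff.2 ⟨he, heA⟩⟩), by omega⟩))
    rcases hp with rfl | rfl
    · rw [← hReq] at hex
      have hgv : g q = hex.choose := by
        simp only [hg]
        rw [dif_pos hex]
      have hge := hex.choose_spec
      rw [← hgv] at hge
      refine fin (g q) hge.1 (by rw [← hReq]; exact hge.2) ?_
      rcases hq with rfl | rfl <;> simp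
    · refine fin s(a, x) (by simpa using hax) ?_ (by simp)
      rw [← hReq]
      intro z hz
      rw [Finset.mem_insert, Finset.mem_singleton]
      rcases Sym2.mem_iff.1 hz with rfl | rfl <;> grind
  rcases Nat.lt_or_ge 5 (Fintype.card α) with hk6 | hk6
  · have he := edge_count F a b c d hab' hcd' hac had hbc hbd (by omega) hI h1 h2
    set W := 2 * Fintype.card α - 7 with hW
    refine ml_levels F G ε hε ⟨s(a, b), by simpa using hab⟩ h (by omega) (1 / 23) (by norm_num)
      hNB A ∅ Q 1 1 2 3 4 1 12 (4 * W) (by norm_num) (by norm_num) (by norm_num) (by norm_num)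
      (by norm_num) (by norm_num) (by omega) 2 0 3 W ?_ (by simp) ?_ ?_ (236 / 100) (by norm_num)
      hP ?_ ?_ ?_
    · rw [hAc]; norm_num
    · exact_mod_cast hQc
    · exact_mod_cast (by omega : (F.edgeFinset \ (A ∪ ∅ ∪ Q)).card ≤ W)
    · have : (0 : ℝ) < W := by exact_mod_cast (by omega : 0 < W)
      push_cast
      have h1 : (W : ℝ) / (4 * W) = 1 / 4 := by field_simp
      rw [h1]
      norm_num
    · have hkR : (6 : ℝ) ≤ Fintype.card α := by exact_mod_cast hk6
      have hWR : (W : ℝ) = 2 * (Fintype.card α : ℝ) - 7 := by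
        rw [hW, Nat.cast_sub (by omega)]
        push_cast
        ring
      push_cast
      rw [hWR]
      set K : ℝ := (Fintype.card α : ℝ) with hK
      have hK0 : 0 < K := by linarith
      have h1 : 2 * ((4 : ℝ) - 1) / K ^ 1 + 0 * ((1 : ℝ) - 1) / K ^ 1 + 3 * ((12 : ℝ) - 1) / K ^ 2
          + (2 * K - 7) * (4 * (2 * K - 7) - 1) / K ^ 3
          = (6 * K ^ 2 + 33 * K + (2 * K - 7) * (4 * (2 * K - 7) - 1)) / K ^ 3 := by
        field_simp
        ring
      rw [h1, div_le_iff₀ (by positivity)]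
      obtain ⟨j, hj⟩ : ∃ j, K = 6 + j := ⟨K - 6, by ring⟩
      have hj0 : 0 ≤ j := by linarith
      rw [hj]
      rw [← sub_nonneg]
      have h3 : (236 / 100 : ℝ) * (6 + j) ^ 3 - (6 * (6 + j) ^ 2 + 33 * (6 + j)
          + (2 * (6 + j) - 7) * (4 * (2 * (6 + j) - 7) - 1))
          = 236 / 100 * j ^ 3 + 2048 / 100 * j ^ 2 + 7188 / 100 * j + 76 / 100 := by ring
      rw [h3]
      positivity
    · norm_num at hinv ⊢
      linarith
  · have hk : Fintype.card α = 5 := by omega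
    refine ml_levels F G ε hε ⟨s(a, b), by simpa using hab⟩ h (by omega) (1 / 23) (by norm_num)
      hNB A ∅ Q 1 1 2 3 4 1 8 16 (by norm_num) (by norm_num) (by norm_num) (by norm_num)
      (by norm_num) (by norm_num) (by omega) 2 0 3 2 ?_ (by simp) ?_ ?_ (228 / 100) (by norm_num)
      hP ?_ ?_ ?_
    · rw [hAc]; norm_num
    · exact_mod_cast hQc
    · exact_mod_cast (by omega : (F.edgeFinset \ (A ∪ ∅ ∪ Q)).card ≤ 2)
    · norm_num
    · rw [hk]; norm_num
    · norm_num at hinv ⊢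
      linarith

theorem all_cases {α β : Type*} [Fintype α] [Fintype β]
    (F : SimpleGraph α) (G : SimpleGraph β) (ε : ℝ) (hε : 0 < ε)
    (hF : F.edgeSet.Nonempty) (h : FarFromFree F G ε) :
    Concl F G (ε / (Fintype.card α : ℝ) ^ (Fintype.card α)) := by
  classical
  rcases setup F G ε hε hF h with hc | ⟨hn, hbig⟩
  · exact hc
  by_cases h2 : ∃ a b c d, F.Adj a b ∧ F.Adj c d ∧ a ≠ c ∧ a ≠ d ∧ b ≠ c ∧ b ≠ d
  · obtain ⟨a, b, c, d, hab, hcd, hac, had, hbc, hbd⟩ := h2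
    by_cases h3 : ∃ a b c d x y, F.Adj a b ∧ F.Adj c d ∧ F.Adj x y ∧
        a ≠ c ∧ a ≠ d ∧ b ≠ c ∧ b ≠ d ∧ a ≠ x ∧ a ≠ y ∧ b ≠ x ∧ b ≠ y ∧
        c ≠ x ∧ c ≠ y ∧ d ≠ x ∧ d ≠ y
    · obtain ⟨a, b, c, d, x, y, hab, hcd, hxy, hac, had, hbc, hbd, hax, hay, hbx, hby,
        hcx, hcy, hdx, hdy⟩ := h3
      exact case_three F G ε hε h hbig a b c d x y hab hcd hxy hac had hbc hbd hax hay hbx hby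
        hcx hcy hdx hdy
    have path : ∀ a b c d x, F.Adj a b → F.Adj c d → F.Adj a x → a ≠ c → a ≠ d → b ≠ c → b ≠ d →
        b ≠ x → c ≠ x → d ≠ x → Concl F G (ε / (Fintype.card α : ℝ) ^ (Fintype.card α)) := by
      intro a b c d x hab hcd hax hac had hbc hbd hbx hcx hdx
      refine case_path F G ε hε h hbig a b c d x hab hcd hax hac had hbc hbd hbx hcx hdx ?_ ?_ ?_
      · intro u v huv
        by_contra hno
        simp only [Finset.mem_insert, Finset.mem_singleton, not_or] at hno
        obtain ⟨⟨h1, h2, h3', h4⟩, h5, h6, h7, h8⟩ := hno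
        exact h3 ⟨a, b, c, d, u, v, hab, hcd, huv, hac, had, hbc, hbd, Ne.symm h1, Ne.symm h5,
          Ne.symm h2, Ne.symm h6, Ne.symm h3', Ne.symm h7, Ne.symm h4, Ne.symm h8⟩
      · intro y z hy hz hay hbz
        by_contra hyz
        simp only [Finset.mem_insert, Finset.mem_singleton, not_or] at hy hz
        have := hab.ne
        exact h3 ⟨a, y, b, z, c, d, hay, hbz, hcd, by grind⟩
      · intro y z hy hz hay hbz
        by_contra hyz
        simp only [Finset.mem_insert, Finset.mem_singleton, not_or] at hy hz
        have := hcd.ne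
        exact h3 ⟨c, y, d, z, a, b, hay, hbz, hab, by grind⟩
    by_cases hout : ∃ u x, F.Adj u x ∧ (u = a ∨ u = b ∨ u = c ∨ u = d) ∧
        x ≠ a ∧ x ≠ b ∧ x ≠ c ∧ x ≠ d
    · obtain ⟨u, x, hux, hu, hxa, hxb, hxc, hxd⟩ := hout
      rcases hu with rfl | rfl | rfl | rfl
      · exact path u b c d x hab hcd hux hac had hbc hbd hxb.symm hxc.symm hxd.symm
      · exact path u a c d x hab.symm hcd hux hbc hbd hac had hxa.symm hxc.symm hxd.symm
      · exact path u d a b x hcd hab hux hac.symm hbc.symm had.symm hbd.symm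
          hxd.symm hxa.symm hxb.symm
      · exact path u c a b x hcd.symm hab hux had.symm hbd.symm hac.symm hbc.symm
          hxc.symm hxa.symm hxb.symm
    · refine case_four F G ε hε h hbig a b c d hab hcd hac had hbc hbd ?_
      intro u v huv
      by_contra hno
      push Not at hno
      by_cases hv : v = a ∨ v = b ∨ v = c ∨ v = d
      · exact hout ⟨v, u, huv.symm, hv, hno⟩
      · push Not at hv
        exact h3 ⟨a, b, c, d, u, v, hab, hcd, huv, by grind⟩
  · obtain ⟨e, he⟩ := hF
    induction e with
    | _ a b =>
    have hab : F.Adj a b := he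
    have hmeet : ∀ p q r s, F.Adj p q → F.Adj r s → p = r ∨ p = s ∨ q = r ∨ q = s := by
      intro p q r s h1 h3
      by_contra hno
      push Not at hno
      exact h2 ⟨p, q, r, s, h1, h3, hno⟩
    by_cases hsa : ∀ u v, F.Adj u v → u = a ∨ v = a
    · exact case_star F G ε hε h hbig a b hab hsa
    by_cases hsb : ∀ u v, F.Adj u v → u = b ∨ v = b
    · exact case_star F G ε hε h hbig b a hab.symm hsb
    push Not at hsa hsb
    have hb' : ∃ x, F.Adj b x ∧ x ≠ a := by
      obtain ⟨u, v, huv, h1, h3⟩ := hsa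
      have := hmeet a b u v hab huv
      have hs := huv.symm
      by_cases hbu : b = u
      · exact ⟨v, hbu ▸ huv, h3⟩
      · exact ⟨u, by grind, h1⟩
    have ha' : ∃ x, F.Adj a x ∧ x ≠ b := by
      obtain ⟨u, v, huv, h1, h3⟩ := hsb
      have := hmeet a b u v hab huv
      have hs := huv.symm
      by_cases hbu : a = u
      · exact ⟨v, hbu ▸ huv, h3⟩
      · exact ⟨u, by grind, h1⟩
    obtain ⟨x, hbx, hxa⟩ := hb'
    obtain ⟨y, hay, hyb⟩ := ha'
    have hxy : x = y := by
      have := hmeet b x a y hbx hay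
      have := hab.ne
      grind
    subst hxy
    refine case_triangle F G ε hε h hbig a b x hab hay hbx ?_
    intro u v huv
    have h1 := hmeet a b u v hab huv
    have h3 := hmeet a x u v hay huv
    have h4 := hmeet b x u v hbx huv
    have := hab.ne
    grind

end Cases3


/-- If `F` has at least one edge and the `n`-vertex graph `G` is
`ε`-far from `F`-free, then `G` has a subgraph `G'` with at least
`(ε/|V(F)|^{|V(F)|})^{1/2}·n` vertices that is uniformly
`ε/(2·|V(F)|^{|V(F)|})`-far from `F`-free. -/
theorem stmt_8 {α β : Type*} [Fintype α] [Fintype β]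
    (F : SimpleGraph α) (G : SimpleGraph β) (ε : ℝ) (hε : 0 < ε)
    (hF : F.edgeSet.Nonempty) (h : FarFromFree F G ε) :
    ∃ G' : G.Subgraph, ∃ π : G'.coe →g F,
      Real.sqrt (ε / (Nat.card α : ℝ) ^ (Nat.card α)) * (Nat.card β : ℝ) ≤
        (Nat.card G'.verts : ℝ) ∧
      UniformlyFarWith F G'.coe π (ε / (2 * (Nat.card α : ℝ) ^ (Nat.card α))) := by
  have hc := all_cases F G ε hε hF h
  rw [Nat.card_eq_fintype_card (α := α)]
  obtain ⟨G', π, h1, h2⟩ := hc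
  refine ⟨G', π, h1, ?_⟩
  have h3 : ε / (2 * (Fintype.card α : ℝ) ^ (Fintype.card α))
      = ε / (Fintype.card α : ℝ) ^ (Fintype.card α) / 2 := by
    rw [div_div, mul_comm]
  rw [h3]
  exact h2
end

section
/- Let F be a graph with at least one edge. Then every F-splittable graph is F-abundant. -/
/-- `H` is `F`-splittable: there is an `F`-colouring `σ` of `H` such that every
subgraph of `H` with at least one edge has an edge cut-set whose edges span only two
colours, i.e. its vertex set can be partitioned into two nonempty parts such that every
crossing edge joins a vertex of colour `a` to a vertex of colour `b`. -/
def Splittable {α β : Type*} (F : SimpleGraph α) (H : SimpleGraph β) : Prop :=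
  ∃ σ : H →g F, ∀ H' : H.Subgraph, H'.edgeSet.Nonempty →
    ∃ (a b : α) (X Y : Set β), X.Nonempty ∧ Y.Nonempty ∧ Disjoint X Y ∧
      X ∪ Y = H'.verts ∧
      ∀ x y, H'.Adj x y → x ∈ X → y ∈ Y →
        ((σ x = a ∧ σ y = b) ∨ (σ x = b ∧ σ y = a))

namespace Spl

set_option linter.unusedSectionVars false
set_option linter.unusedFintypeInType false

open Finset Classical

variable {α β V : Type*} [Fintype α] [Fintype β] [Fintype V]

def Edg (Fa : Finset (α → V)) (a b : α) (u v : V) : Prop := ∃ f ∈ Fa, f a = u ∧ f b = v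

def Inj (F : SimpleGraph α) (Fa : Finset (α → V)) : Prop :=
  ∀ a b, F.Adj a b → ∀ f ∈ Fa, ∀ g ∈ Fa, f a = g a → f b = g b → f = g

def P (F : SimpleGraph α) (H : SimpleGraph β) (σ : β → α) (S : Finset β) (Fa : Finset (α → V))
    (φ : β → V) : Prop :=
  (∀ x ∈ S, ∀ a', F.Adj (σ x) a' → ∃ f ∈ Fa, f (σ x) = φ x) ∧
  ∀ x ∈ S, ∀ y ∈ S, H.Adj x y → Edg Fa (σ x) (σ y) (φ x) (φ y)

noncomputable def N (F : SimpleGraph α) (H : SimpleGraph β) (σ : β → α) (S : Finset β)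
    (Fa : Finset (α → V)) : Finset (β → V) := univ.filter (P F H σ S Fa)

lemma sum_edg {F : SimpleGraph α} {Fa : Finset (α → V)} (hI : Inj F Fa) {a b : α}
    (hab : F.Adj a b) (h : V → V → ℝ) :
    ∑ f ∈ Fa, h (f a) (f b) = ∑ u, ∑ v, (if Edg Fa a b u v then 1 else 0) * h u v := by
  rw [← Finset.sum_product', Finset.univ_product_univ]
  simp only [ite_mul, one_mul, zero_mul]
  rw [← Finset.sum_filter]
  have : (univ.filter fun p : V × V => Edg Fa a b p.1 p.2) = Fa.image (fun f => (f a, f b)) := by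
    ext ⟨u, v⟩
    rw [Finset.mem_filter]
    simp [Edg]
  rw [this, Finset.sum_image]
  intro f hf g hg hfg
  simp only [Prod.mk.injEq] at hfg
  exact hI a b hab f hf g hg hfg.1 hfg.2

noncomputable def nb (Fa : Finset (α → V)) (a b : α) (f : α → V) : Finset (α → V) :=
  Fa.filter fun g => Edg Fa a b (f a) (g b) ∧ Edg Fa a b (g a) (f b)

lemma c4 {F : SimpleGraph α} {Fa : Finset (α → V)} (hI : Inj F Fa) {a b : α}
    (hab : F.Adj a b) :
    (Fa.card : ℝ) ^ 4 ≤ (Fintype.card V : ℝ) ^ 4 * ∑ f ∈ Fa, ((nb Fa a b f).card : ℝ) := by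
  set e : V → V → ℝ := fun u v => if Edg Fa a b u v then 1 else 0 with he
  have h1 : (Fa.card : ℝ) = ∑ v, ∑ u, e u v := by
    have := sum_edg hI hab (fun _ _ => 1)
    simp only [mul_one, sum_const, nsmul_eq_mul] at this
    rw [this, Finset.sum_comm]
  have h2 : ∑ f ∈ Fa, ((nb Fa a b f).card : ℝ)
      = ∑ u, ∑ v, e u v * ∑ u', ∑ v', e u' v' * (e u v' * e u' v) := by
    have : ∀ f ∈ Fa, ((nb Fa a b f).card : ℝ) =
        ∑ u', ∑ v', e u' v' * (e (f a) v' * e u' (f b)) := by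
      intro f hf
      rw [← sum_edg hI hab (fun u' v' => e (f a) v' * e u' (f b))]
      rw [nb, Finset.card_filter]
      push_cast
      refine Finset.sum_congr rfl fun g hg => ?_
      simp only [he]
      split_ifs <;> simp_all
    rw [Finset.sum_congr rfl this]
    exact sum_edg hI hab (fun u v => ∑ u', ∑ v', e u' v' * (e u v' * e u' v))
  have h3 : ∑ f ∈ Fa, ((nb Fa a b f).card : ℝ) = ∑ p : V × V, (∑ v, e p.1 v * e p.2 v) ^ 2 := by
    rw [h2, Fintype.sum_prod_type]
    refine Finset.sum_congr rfl fun u _ => ?_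
    simp only [Finset.mul_sum]
    rw [Finset.sum_comm]
    refine Finset.sum_congr rfl fun u' _ => ?_
    rw [sq, Finset.sum_mul_sum]
    refine Finset.sum_congr rfl fun v _ => Finset.sum_congr rfl fun v' _ => ?_
    ring
  have h4 : (∑ p : V × V, ∑ v, e p.1 v * e p.2 v) = ∑ v, (∑ u, e u v) ^ 2 := by
    rw [Finset.sum_comm]
    refine Finset.sum_congr rfl fun v _ => ?_
    rw [sq, Finset.sum_mul_sum, Fintype.sum_prod_type]
  have c1 := sq_sum_le_card_mul_sum_sq (s := (univ : Finset V)) (f := fun v => ∑ u, e u v)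
  have c2 := sq_sum_le_card_mul_sum_sq (s := (univ : Finset (V × V)))
    (f := fun p => ∑ v, e p.1 v * e p.2 v)
  rw [← h3, h4] at c2
  rw [← h1] at c1
  simp only [Finset.card_univ, Fintype.card_prod] at c1 c2
  push_cast at c2
  set m : ℝ := ((Fintype.card V : ℕ) : ℝ)
  set Q := ∑ v, (∑ u, e u v) ^ 2
  have hm : 0 ≤ m := Nat.cast_nonneg _
  calc (Fa.card : ℝ) ^ 4 = ((Fa.card : ℝ) ^ 2) ^ 2 := by ring
    _ ≤ (m * Q) ^ 2 := by gcongr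
    _ = m ^ 2 * Q ^ 2 := by ring
    _ ≤ m ^ 2 * (m * m * ∑ f ∈ Fa, ((nb Fa a b f).card : ℝ)) := by gcongr
    _ = _ := by ring

noncomputable def ext (Fa : Finset (α → V)) (σ : β → α) (a b : α) (X : Finset β) (φ : β → V) :
    Finset (α → V) :=
  Fa.filter fun g => ∀ x ∈ X, (σ x = b → Edg Fa a b (g a) (φ x)) ∧
    (σ x = a → Edg Fa a b (φ x) (g b))

/-- Power mean. -/
lemma pm {ι : Type*} (s : Finset ι) (f : ι → ℝ) (hf : ∀ i ∈ s, 0 ≤ f i) (C : ℕ) (M t : ℝ)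
    (ht : 0 ≤ t) (hM : (s.card : ℝ) = M) (h : M * t ≤ ∑ i ∈ s, f i) :
    M * t ^ (C + 1) ≤ ∑ i ∈ s, f i ^ (C + 1) := by
  have hM0 : 0 ≤ M := hM ▸ Nat.cast_nonneg _
  rcases hM0.eq_or_lt with h0 | h0
  · rw [← h0]; simp; exact Finset.sum_nonneg fun i hi => pow_nonneg (hf i hi) _
  refine le_trans ?_ (pow_sum_div_card_le_sum_pow hf C)
  rw [hM, le_div_iff₀ (by positivity)]
  calc M * t ^ (C + 1) * M ^ C = (M * t) ^ (C + 1) := by ring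
    _ ≤ _ := by gcongr

lemma Inj.mono {F : SimpleGraph α} {A B : Finset (α → V)} (hB : Inj F B) (h : A ⊆ B) : Inj F A :=
  fun a b hab f hf g hg => hB a b hab f (h hf) g (h hg)

lemma Edg.mono {A B : Finset (α → V)} (h : A ⊆ B) {a b : α} {u v : V} (hE : Edg A a b u v) :
    Edg B a b u v := by
  obtain ⟨f, hf, h1⟩ := hE
  exact ⟨f, h hf, h1⟩

lemma Edg.symm {A : Finset (α → V)} {a b : α} {u v : V} (hE : Edg A a b u v) :
    Edg A b a v u := by
  obtain ⟨f, hf, h1, h2⟩ := hE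
  exact ⟨f, hf, h2, h1⟩

lemma P.mono {F : SimpleGraph α} {H : SimpleGraph β} {σ : β → α} {S : Finset β}
    {A B : Finset (α → V)} (h : A ⊆ B) {φ : β → V} (hP : P F H σ S A φ) : P F H σ S B φ := by
  refine ⟨fun x hx a' ha => ?_, fun x hx y hy hxy => (hP.2 x hx y hy hxy).mono h⟩
  obtain ⟨f, hf, h1⟩ := hP.1 x hx a' ha
  exact ⟨f, h hf, h1⟩

lemma double {F : SimpleGraph α} {H : SimpleGraph β} {σ : β → α} {X : Finset β}
    {Fa : Finset (α → V)} {a b : α} (hab : F.Adj a b) :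
    ∑ f ∈ Fa, ((N F H σ X (nb Fa a b f)).card : ℝ) ≤
      ∑ φ ∈ N F H σ X Fa, ((ext Fa σ a b X φ).card : ℝ) := by
  have key : ∑ φ ∈ N F H σ X Fa, (ext Fa σ a b X φ).card =
      ∑ f ∈ Fa, ((N F H σ X Fa).filter (fun φ => f ∈ ext Fa σ a b X φ)).card := by
    simp only [Finset.card_filter]
    rw [Finset.sum_comm]
    refine Finset.sum_congr rfl fun φ _ => ?_
    rw [← Finset.card_filter]
    congr 1
    ext g
    simp [ext]
  have : ∑ f ∈ Fa, (N F H σ X (nb Fa a b f)).card ≤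
      ∑ φ ∈ N F H σ X Fa, (ext Fa σ a b X φ).card := by
    rw [key]
    refine Finset.sum_le_sum fun f hf => Finset.card_le_card ?_
    intro φ hφ
    have hP : P F H σ X (nb Fa a b f) φ := by simpa [N] using hφ
    rw [Finset.mem_filter]
    refine ⟨?_, ?_⟩
    · simp only [N, mem_filter, mem_univ, true_and]
      exact hP.mono (Finset.filter_subset _ _)
    · rw [ext, Finset.mem_filter]
      refine ⟨hf, fun x hx => ⟨fun h => ?_, fun h => ?_⟩⟩
      · obtain ⟨g, hg, h1⟩ := hP.1 x hx a (h ▸ hab.symm)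
        rw [nb, Finset.mem_filter] at hg
        rw [← h1, h]; exact hg.2.1
      · obtain ⟨g, hg, h1⟩ := hP.1 x hx b (h ▸ hab)
        rw [nb, Finset.mem_filter] at hg
        rw [← h1, h]; exact hg.2.2
  exact_mod_cast this

lemma glue {F : SimpleGraph α} {H : SimpleGraph β} {σ : β → α} {X Y : Finset β}
    (hXY : Disjoint X Y)
    {Fa : Finset (α → V)} {a b : α} (hab : F.Adj a b)
    (hcr : ∀ x ∈ X, ∀ y ∈ Y, H.Adj x y → (σ x = a ∧ σ y = b) ∨ (σ x = b ∧ σ y = a)) :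
    ∑ φ ∈ N F H σ X Fa, ((N F H σ Y (ext Fa σ a b X φ)).card : ℝ) ≤
      ((N F H σ (X ∪ Y) Fa).card : ℝ) * (Fintype.card (β → V) : ℝ) := by
  have : ((N F H σ X Fa).sigma (fun φ => N F H σ Y (ext Fa σ a b X φ))).card ≤
      ((N F H σ (X ∪ Y) Fa) ×ˢ (univ : Finset (β → V))).card := by
    refine Finset.card_le_card_of_injOn
      (fun p => (X.piecewise p.1 p.2, X.piecewise p.2 p.1)) ?_ ?_
    · rintro ⟨φ, ψ⟩ h
      simp only [N, coe_sigma, Set.mem_sigma_iff, mem_coe, mem_filter, mem_univ, true_and] at h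
      obtain ⟨h1, h2⟩ := h
      simp only [N, mem_coe, mem_product, mem_univ, and_true, mem_filter, true_and]
      have hsub : ext Fa σ a b X φ ⊆ Fa := Finset.filter_subset _ _
      have h2' := h2.mono hsub
      have hx : ∀ x ∈ X, X.piecewise φ ψ x = φ x := fun x hx => Finset.piecewise_eq_of_mem _ _ _ hx
      have hy : ∀ x ∈ Y, X.piecewise φ ψ x = ψ x := fun x hx =>
        Finset.piecewise_eq_of_notMem _ _ _ (Finset.disjoint_right.1 hXY hx)
      have cross : ∀ x ∈ X, ∀ y ∈ Y, H.Adj x y → Edg Fa (σ x) (σ y) (φ x) (ψ y) := by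
        intro x hx y hy hxy
        rcases hcr x hx y hy hxy with ⟨ha, hb⟩ | ⟨hb, ha⟩
        · obtain ⟨g, hg, hg1⟩ := h2.1 y hy a (hb ▸ hab.symm)
          rw [ext, Finset.mem_filter] at hg
          have := (hg.2 x hx).2 ha
          rw [ha, ← hg1, hb]; exact this
        · obtain ⟨g, hg, hg1⟩ := h2.1 y hy b (ha ▸ hab)
          rw [ext, Finset.mem_filter] at hg
          have := (hg.2 x hx).1 hb
          rw [hb, ← hg1, ha]; exact this.symm
      constructor
      · intro x hxS a' ha'
        rcases Finset.mem_union.1 hxS with h | h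
        · rw [hx x h]; exact h1.1 x h a' ha'
        · rw [hy x h]; exact h2'.1 x h a' ha'
      · intro x hxS y hyS hxy
        rcases Finset.mem_union.1 hxS with h | h <;> rcases Finset.mem_union.1 hyS with h' | h'
        · rw [hx x h, hx y h']; exact h1.2 x h y h' hxy
        · rw [hx x h, hy y h']; exact cross x h y h' hxy
        · rw [hy x h, hx y h']; exact (cross y h' x h hxy.symm).symm
        · rw [hy x h, hy y h']; exact h2'.2 x h y h' hxy
    · rintro ⟨φ, ψ⟩ _ ⟨φ', ψ'⟩ _ h
      simp only [Prod.mk.injEq] at h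
      have e1 : ∀ x, φ x = φ' x ∧ ψ x = ψ' x := by
        intro x
        have a1 := congrFun h.1 x
        have a2 := congrFun h.2 x
        by_cases hx : x ∈ X <;> simp [hx] at a1 a2 <;> exact ⟨by assumption, by assumption⟩
      obtain rfl : φ = φ' := funext fun x => (e1 x).1
      obtain rfl : ψ = ψ' := funext fun x => (e1 x).2
      rfl
  rw [Finset.card_sigma, Finset.card_product, Finset.card_univ] at this
  exact_mod_cast this

def Good (F : SimpleGraph α) (H : SimpleGraph β) (σ : β → α) (V : Type*) [Fintype V]
    (S : Finset β) (C : ℕ) : Prop :=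
  ∀ Fa : Finset (α → V), Inj F Fa →
    (Fintype.card (β → V) : ℝ) * ((Fa.card : ℝ) / (Fintype.card V : ℝ) ^ 2) ^ (C + 1) ≤
      ((N F H σ S Fa).card : ℝ)

lemma step [Nonempty V] {F : SimpleGraph α} {H : SimpleGraph β} {σ : β → α} {X Y : Finset β}
    (hXY : Disjoint X Y) {a b : α} (hab : F.Adj a b)
    (hcr : ∀ x ∈ X, ∀ y ∈ Y, H.Adj x y → (σ x = a ∧ σ y = b) ∨ (σ x = b ∧ σ y = a))
    {CX CY : ℕ} (hX : Good F H σ V X CX) (hY : Good F H σ V Y CY) :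
    Good F H σ V (X ∪ Y) ((3 * (CX + 1) + 1) * (CY + 1) - 1) := by
  intro Fa hI
  have hex : (3 * (CX + 1) + 1) * (CY + 1) - 1 + 1 = (3 * (CX + 1) + 1) * (CY + 1) :=
    Nat.sub_add_cancel (Nat.mul_pos (by omega) (by omega))
  rw [hex]
  set n : ℝ := ((Fintype.card V : ℕ) : ℝ) with hn
  have hn0 : 0 < n := by rw [hn]; exact_mod_cast Fintype.card_pos
  set M : ℝ := ((Fintype.card (β → V) : ℕ) : ℝ) with hM
  have hM0 : 0 < M := by rw [hM]; exact_mod_cast Fintype.card_pos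
  set k : ℝ := ((Fa.card : ℕ) : ℝ) with hk
  have hk0 : 0 ≤ k := Nat.cast_nonneg _
  set δ : ℝ := k / n ^ 2 with hδ
  have hδ0 : 0 ≤ δ := by positivity
  have A1 : k * (δ ^ 3) ^ (CX + 1) ≤
      ∑ f ∈ Fa, (((nb Fa a b f).card : ℝ) / n ^ 2) ^ (CX + 1) := by
    refine pm Fa _ (fun _ _ => by positivity) CX k (δ ^ 3) (by positivity) rfl ?_
    rw [← Finset.sum_div, le_div_iff₀ (by positivity)]
    have := c4 hI hab
    rw [← hn, ← hk] at this
    have e : k * δ ^ 3 * n ^ 2 = k ^ 4 / n ^ 4 := by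
      rw [hδ]; field_simp
    rw [e, div_le_iff₀ (by positivity)]
    linarith
  have A2 : M * (k * (δ ^ 3) ^ (CX + 1)) ≤ ∑ f ∈ Fa, ((N F H σ X (nb Fa a b f)).card : ℝ) := by
    refine (mul_le_mul_of_nonneg_left A1 hM0.le).trans ?_
    rw [Finset.mul_sum]
    exact Finset.sum_le_sum fun f _ => hX _ (hI.mono (Finset.filter_subset _ _))
  have A3 := A2.trans (double hab)
  set t : ℝ := δ * (δ ^ 3) ^ (CX + 1) with ht
  set w : (β → V) → ℝ := fun φ => if φ ∈ N F H σ X Fa then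
    ((ext Fa σ a b X φ).card : ℝ) / n ^ 2 else 0 with hw
  have A4 : M * t ^ (CY + 1) ≤ ∑ φ, w φ ^ (CY + 1) := by
    refine pm univ w (fun φ _ => ?_) CY M t (by positivity) (by rw [Finset.card_univ]) ?_
    · simp only [hw]; split_ifs <;> positivity
    · simp only [hw]
      rw [← Finset.sum_filter, Finset.filter_mem_eq_inter, Finset.univ_inter, ← Finset.sum_div,
        le_div_iff₀ (by positivity)]
      refine le_trans (le_of_eq ?_) A3
      rw [ht]
      have : δ * n ^ 2 = k := by rw [hδ]; field_simp
      rw [← this]; ring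
  have A5 : M * (M * t ^ (CY + 1)) ≤
      ∑ φ ∈ N F H σ X Fa, ((N F H σ Y (ext Fa σ a b X φ)).card : ℝ) := by
    refine (mul_le_mul_of_nonneg_left A4 hM0.le).trans ?_
    simp only [hw, ite_pow, zero_pow (Nat.succ_ne_zero CY)]
    rw [← Finset.sum_filter, Finset.filter_mem_eq_inter, Finset.univ_inter, Finset.mul_sum]
    exact Finset.sum_le_sum fun φ _ => hY _ (hI.mono (Finset.filter_subset _ _))
  have A6 := A5.trans (glue hXY hab hcr)
  rw [← hM, mul_comm M] at A6
  have A7 := le_of_mul_le_mul_right A6 hM0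
  refine le_trans (le_of_eq ?_) A7
  rw [ht]; ring

lemma base [Nonempty V] {F : SimpleGraph α} {H : SimpleGraph β} {σ : β → α}
    {a b : α} (hab : F.Adj a b) {S : Finset β} (hS : S.card ≤ 1) : Good F H σ V S 0 := by
  intro Fa hI
  have hn0 : (0 : ℝ) < ((Fintype.card V : ℕ) : ℝ) := by exact_mod_cast Fintype.card_pos
  rw [zero_add, pow_one, mul_div_assoc', div_le_iff₀ (by positivity)]
  suffices h : Fintype.card (β → V) * Fa.card ≤
      (N F H σ S Fa).card * (Fintype.card V * Fintype.card V) by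
    rw [sq]; exact_mod_cast h
  have triv : N F H σ S Fa = univ → Fintype.card (β → V) * Fa.card ≤
      (N F H σ S Fa).card * (Fintype.card V * Fintype.card V) := by
    intro h
    rw [h, Finset.card_univ]
    refine Nat.mul_le_mul_left _ ?_
    rw [← Fintype.card_prod, ← Finset.card_univ]
    refine Finset.card_le_card_of_injOn (fun f => (f a, f b)) (fun _ _ => by simp) ?_
    intro f hf g hg hfg
    simp only [Prod.mk.injEq] at hfg
    exact hI a b hab f hf g hg hfg.1 hfg.2
  rcases S.eq_empty_or_nonempty with rfl | ⟨x₀, hx₀⟩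
  · exact triv (Finset.eq_univ_of_forall fun φ => by simp [N, P])
  have hx : S ⊆ {x₀} := fun y hy => by
    rw [Finset.mem_singleton]; exact Finset.card_le_one.1 hS y hy x₀ hx₀
  revert hx
  generalize x₀ = x
  intro hx
  by_cases hiso : x ∈ S ∧ ∃ a', F.Adj (σ x) a'
  · obtain ⟨hxS, a', ha'⟩ := hiso
    rw [← Finset.card_univ (α := β → V), ← Fintype.card_prod, ← Finset.card_univ (α := V × V),
      ← Finset.card_product, ← Finset.card_product]
    refine Finset.card_le_card_of_injOn
      (fun p => (Function.update p.1 x (p.2 (σ x)), (p.1 x, p.2 a'))) ?_ ?_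
    · rintro ⟨φ, f⟩ h
      simp only [mem_coe, mem_product, mem_univ, true_and] at h
      simp only [N, mem_coe, mem_product, mem_filter, mem_univ, true_and, and_true]
      constructor
      · intro y hy _ _
        obtain rfl := Finset.mem_singleton.1 (hx hy)
        exact ⟨f, h, by simp⟩
      · intro y hy z hz hyz
        obtain rfl := Finset.mem_singleton.1 (hx hy)
        obtain rfl := Finset.mem_singleton.1 (hx hz)
        exact absurd hyz (H.loopless.irrefl _)
    · rintro ⟨φ, f⟩ h ⟨φ', f'⟩ h' he
      simp only [mem_coe, mem_product, mem_univ, true_and] at h h'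
      simp only [Prod.mk.injEq] at he
      obtain ⟨h1, h2, h3⟩ := he
      have hfx : f (σ x) = f' (σ x) := by simpa using congrFun h1 x
      obtain rfl := hI _ _ ha' f h f' h' hfx h3
      have : φ = φ' := by
        funext y
        by_cases hy : y = x
        · rw [hy, h2]
        · simpa [hy] using congrFun h1 y
      rw [this]
  · apply triv
    refine Finset.eq_univ_of_forall fun φ => ?_
    simp only [N, mem_filter, mem_univ, true_and]
    constructor
    · intro y hy a' ha'
      obtain rfl := Finset.mem_singleton.1 (hx hy)
      exact absurd ⟨hy, a', ha'⟩ hiso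
    · intro y hy z hz hyz
      obtain rfl := Finset.mem_singleton.1 (hx hy)
      obtain rfl := Finset.mem_singleton.1 (hx hz)
      exact absurd hyz (H.loopless.irrefl _)

lemma split {F : SimpleGraph α} {H : SimpleGraph β} (σ : H →g F) {a₀ b₀ : α}
    (hF : F.Adj a₀ b₀)
    (hs : ∀ H' : H.Subgraph, H'.edgeSet.Nonempty →
    ∃ (a b : α) (X Y : Set β), X.Nonempty ∧ Y.Nonempty ∧ Disjoint X Y ∧
      X ∪ Y = H'.verts ∧
      ∀ x y, H'.Adj x y → x ∈ X → y ∈ Y →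
        ((σ x = a ∧ σ y = b) ∨ (σ x = b ∧ σ y = a))) (S : Finset β) (hS : 1 < S.card) :
    ∃ (a b : α) (X Y : Finset β), F.Adj a b ∧ X.Nonempty ∧ Y.Nonempty ∧ Disjoint X Y ∧
      X ∪ Y = S ∧ ∀ x ∈ X, ∀ y ∈ Y, H.Adj x y →
        ((σ x = a ∧ σ y = b) ∨ (σ x = b ∧ σ y = a)) := by
  by_cases he : ∃ x ∈ S, ∃ y ∈ S, H.Adj x y
  · obtain ⟨x, hx, y, hy, hxy⟩ := he
    obtain ⟨a, b, X, Y, hX, hY, hd, hu, hc⟩ := hs ((⊤ : H.Subgraph).induce (S : Set β))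
      ⟨s(x, y), by simp [hx, hy, hxy]⟩
    have hu' : X ∪ Y = (S : Set β) := by simpa using hu
    have hXS : ∀ x ∈ X, x ∈ S := fun x hx => by
      have : x ∈ X ∪ Y := Or.inl hx
      rw [hu'] at this; simpa using this
    have hYS : ∀ x ∈ Y, x ∈ S := fun x hx => by
      have : x ∈ X ∪ Y := Or.inr hx
      rw [hu'] at this; simpa using this
    have hc' : ∀ x ∈ X, ∀ y ∈ Y, H.Adj x y →
        ((σ x = a ∧ σ y = b) ∨ (σ x = b ∧ σ y = a)) := fun x hx y hy hxy =>
      hc x y (by simp [hXS x hx, hYS y hy, hxy]) hx hy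
    have huF : X.toFinset ∪ Y.toFinset = S := by
      ext z
      have := Set.ext_iff.1 hu' z
      simpa using this
    by_cases hab : F.Adj a b
    · refine ⟨a, b, X.toFinset, Y.toFinset, hab, by simpa using hX, by simpa using hY,
        by simpa using hd, huF, ?_⟩
      intro x hx y hy
      exact hc' x (by simpa using hx) y (by simpa using hy)
    · refine ⟨a₀, b₀, X.toFinset, Y.toFinset, hF, by simpa using hX, by simpa using hY,
        by simpa using hd, huF, ?_⟩
      intro x hx y hy hxy
      exfalso
      have hσ := σ.map_adj hxy
      rcases hc' x (by simpa using hx) y (by simpa using hy) hxy with ⟨h1, h2⟩ | ⟨h1, h2⟩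
      · rw [h1, h2] at hσ; exact hab hσ
      · rw [h1, h2] at hσ; exact hab hσ.symm
  · obtain ⟨x, hx⟩ : S.Nonempty := Finset.card_pos.1 (by omega)
    refine ⟨a₀, b₀, {x}, S.erase x, hF, by simp, ?_, by simp, ?_, ?_⟩
    · apply Finset.card_pos.1
      rw [Finset.card_erase_of_mem hx]; omega
    · rw [← Finset.insert_eq, Finset.insert_erase hx]
    · intro x' hx' y hy hxy
      obtain rfl := Finset.mem_singleton.1 hx'
      exact absurd ⟨_, hx, y, Finset.mem_of_mem_erase hy, hxy⟩ he

lemma main {F : SimpleGraph α} {H : SimpleGraph β} (σ : H →g F) {a₀ b₀ : α}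
    (hF : F.Adj a₀ b₀)
    (hs : ∀ H' : H.Subgraph, H'.edgeSet.Nonempty →
    ∃ (a b : α) (X Y : Set β), X.Nonempty ∧ Y.Nonempty ∧ Disjoint X Y ∧
      X ∪ Y = H'.verts ∧
      ∀ x y, H'.Adj x y → x ∈ X → y ∈ Y →
        ((σ x = a ∧ σ y = b) ∨ (σ x = b ∧ σ y = a))) (S : Finset β) :
    ∃ C : ℕ, ∀ n : ℕ, 0 < n → Good F H σ (Fin n) S C := by
  induction S using Finset.strongInduction with
  | H S ih =>
    by_cases hS : 1 < S.card
    · obtain ⟨a, b, X, Y, hab, hX, hY, hd, rfl, hc⟩ := split σ hF hs S hS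
      have hXs : X ⊂ X ∪ Y := by
        refine Finset.ssubset_iff_subset_ne.2 ⟨Finset.subset_union_left, fun h => ?_⟩
        obtain ⟨y, hy⟩ := hY
        exact Finset.disjoint_right.1 hd hy (by rw [h]; exact Finset.mem_union_right _ hy)
      have hYs : Y ⊂ X ∪ Y := by
        refine Finset.ssubset_iff_subset_ne.2 ⟨Finset.subset_union_right, fun h => ?_⟩
        obtain ⟨y, hy⟩ := hX
        exact Finset.disjoint_left.1 hd hy (by rw [h]; exact Finset.mem_union_left _ hy)
      obtain ⟨CX, hCX⟩ := ih X hXs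
      obtain ⟨CY, hCY⟩ := ih Y hYs
      refine ⟨(3 * (CX + 1) + 1) * (CY + 1) - 1, fun n hn => ?_⟩
      have : Nonempty (Fin n) := ⟨⟨0, hn⟩⟩
      exact step hd hab hc (hCX n hn) (hCY n hn)
    · refine ⟨0, fun n hn => ?_⟩
      have : Nonempty (Fin n) := ⟨⟨0, hn⟩⟩
      exact base hF (by omega)

/-- Packing. -/
lemma packing {F : SimpleGraph α} {G : SimpleGraph V} {a₀ b₀ : α} (hF : F.Adj a₀ b₀) {ε : ℝ}
    (hfar : FarFromFree F G ε) :
    ∃ Fa : Finset (α → V), Inj F Fa ∧ (∀ f ∈ Fa, ∀ a b, F.Adj a b → G.Adj (f a) (f b)) ∧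
      ε * (Fintype.card V : ℝ) ^ 2 ≤ (Fa.card : ℝ) * (Fintype.card α : ℝ) ^ 2 := by
  let Ok : Finset (α → V) → Prop := fun Fa =>
    (∀ f ∈ Fa, ∀ a b, F.Adj a b → G.Adj (f a) (f b)) ∧
    ∀ f ∈ Fa, ∀ g ∈ Fa, ∀ a b c d, F.Adj a b → F.Adj c d → s(f a, f b) = s(g c, g d) → f = g
  obtain ⟨Fa, hFa, hmax⟩ := Finset.exists_max_image (univ.filter Ok) Finset.card
    ⟨∅, by simp [Ok]⟩
  have hOk : Ok Fa := by simpa using hFa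
  refine ⟨Fa, fun a b hab f hf g hg h1 h2 => hOk.2 f hf g hg a b a b hab hab (by rw [h1, h2]),
    hOk.1, ?_⟩
  by_contra hlt
  push Not at hlt
  let D : Set (Sym2 V) := {e | ∃ f ∈ Fa, ∃ a b, F.Adj a b ∧ e = s(f a, f b)}
  have hDc : D.ncard ≤ Fa.card * Fintype.card α ^ 2 := by
    have hsub : D ⊆ ((Fa ×ˢ (univ : Finset (α × α))).image
        (fun p => s(p.1 p.2.1, p.1 p.2.2)) : Finset (Sym2 V)) := by
      rintro e ⟨f, hf, a, b, hab, rfl⟩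
      rw [Finset.mem_coe, Finset.mem_image]
      exact ⟨(f, (a, b)), by simp [hf], rfl⟩
    refine (Set.ncard_le_ncard hsub (Finset.finite_toSet _)).trans ?_
    rw [Set.ncard_coe_finset]
    refine Finset.card_image_le.trans ?_
    rw [Finset.card_product, Finset.card_univ, Fintype.card_prod, sq]
  obtain ⟨f, hfi⟩ := hfar (G.deleteEdges D) (G.deleteEdges_le D) (by
    refine lt_of_le_of_lt ?_ (by rw [Nat.card_eq_fintype_card]; exact hlt)
    have : (G.edgeSet \ (G.deleteEdges D).edgeSet).ncard ≤ D.ncard := by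
      refine Set.ncard_le_ncard ?_ (Set.toFinite _)
      rw [SimpleGraph.edgeSet_deleteEdges]
      intro e he
      by_contra hD
      exact he.2 ⟨he.1, hD⟩
    exact_mod_cast this.trans hDc)
  have hfD : ∀ a b, F.Adj a b → G.Adj (f a) (f b) ∧ s(f a, f b) ∉ D := by
    intro a b hab
    have := f.map_adj hab
    rwa [SimpleGraph.deleteEdges_adj] at this
  have hnot : (f : α → V) ∉ Fa := fun h => (hfD a₀ b₀ hF).2 ⟨f, h, a₀, b₀, hF, rfl⟩
  have hOk' : Ok (insert (f : α → V) Fa) := by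
    constructor
    · intro g hg a b hab
      rcases Finset.mem_insert.1 hg with rfl | hg
      · exact (hfD a b hab).1
      · exact hOk.1 g hg a b hab
    · intro g hg g' hg' a b c d hab hcd he
      rcases Finset.mem_insert.1 hg with rfl | hg <;>
        rcases Finset.mem_insert.1 hg' with rfl | hg'
      · rfl
      · exact absurd ⟨g', hg', c, d, hcd, he⟩ (hfD a b hab).2
      · exact absurd ⟨g, hg, a, b, hab, he.symm⟩ (hfD c d hcd).2
      · exact hOk.2 g hg g' hg' a b c d hab hcd he
  have := hmax _ (by simpa using hOk')
  rw [Finset.card_insert_of_notMem hnot] at this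
  omega

def toSub (H : SimpleGraph β) (G : SimpleGraph V) (φ : β → V) : G.Subgraph where
  verts := Set.range φ
  Adj u v := G.Adj u v ∧ ∃ x y, H.Adj x y ∧ φ x = u ∧ φ y = v
  adj_sub h := h.1
  edge_vert := by
    rintro u v ⟨_, x, y, _, rfl, _⟩
    exact ⟨x, rfl⟩
  symm := ⟨by
    rintro u v ⟨h, x, y, hxy, h1, h2⟩
    exact ⟨h.symm, y, x, hxy.symm, h2, h1⟩⟩

lemma count (H : SimpleGraph β) (G : SimpleGraph V) (I : Finset (β → V))
    (hI : ∀ φ ∈ I, Function.Injective φ ∧ ∀ x y, H.Adj x y → G.Adj (φ x) (φ y)) :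
    I.card ≤ Fintype.card β ^ Fintype.card β * copyCount H G := by
  refine (Finset.card_le_mul_card_image (f := toSub H G) I
    (Fintype.card β ^ Fintype.card β) ?_).trans (Nat.mul_le_mul_left _ ?_)
  · intro K hK
    obtain ⟨φ₀, hφ₀, rfl⟩ := Finset.mem_image.1 hK
    have hr : ∀ φ ∈ I.filter (fun φ => toSub H G φ = toSub H G φ₀), ∀ x, ∃ y, φ₀ y = φ x := by
      intro φ hφ x
      have h1 : (toSub H G φ).verts = (toSub H G φ₀).verts := by
        rw [(Finset.mem_filter.1 hφ).2]
      have h2 : φ x ∈ (toSub H G φ).verts := ⟨x, rfl⟩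
      rw [h1] at h2
      exact h2
    have hc : Fintype.card β ^ Fintype.card β = (univ : Finset (β → β)).card := by
      rw [Finset.card_univ, Fintype.card_fun]
    rw [hc]
    refine Finset.card_le_card_of_injOn
      (fun φ => if h : ∀ x, ∃ y, φ₀ y = φ x then fun x => (h x).choose else id)
      (fun _ _ => by simp) ?_
    intro φ hφ φ' hφ' he
    have h1 := hr φ hφ
    have h2 := hr φ' hφ'
    simp only [h1, h2, implies_true, dite_true] at he
    funext x
    rw [← (h1 x).choose_spec, ← (h2 x).choose_spec]
    exact congrArg φ₀ (congrFun he x)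
  · rw [copyCount, ← Set.ncard_coe_finset]
    refine Set.ncard_le_ncard ?_ (Set.toFinite _)
    intro K hK
    rw [Finset.mem_coe] at hK
    obtain ⟨φ, hφ, rfl⟩ := Finset.mem_image.1 hK
    obtain ⟨hi, hh⟩ := hI φ hφ
    refine ⟨⟨Equiv.ofInjective φ hi, ?_⟩⟩
    intro x y
    change (G.Adj (φ x) (φ y) ∧ ∃ x' y', H.Adj x' y' ∧ φ x' = φ x ∧ φ y' = φ y) ↔ H.Adj x y
    constructor
    · rintro ⟨_, x', y', h, h1, h2⟩
      rwa [← hi h1, ← hi h2]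
    · intro h
      exact ⟨hh x y h, x, y, h, rfl, rfl⟩

lemma noninj : (univ.filter (fun φ : β → V => ¬ Function.Injective φ)).card * Fintype.card V ≤
    Fintype.card β ^ 2 * Fintype.card (β → V) := by
  rcases isEmpty_or_nonempty β with hb | ⟨⟨b⟩⟩
  · rw [Finset.filter_false_of_mem, Finset.card_empty, Nat.zero_mul]
    · exact Nat.zero_le _
    · intro φ _ h
      exact h (Function.injective_of_subsingleton φ)
  have hex : ∀ φ : β → V, ∃ p : β × β, ¬ Function.Injective φ → φ p.1 = φ p.2 ∧ p.1 ≠ p.2 := by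
    intro φ
    by_cases h : Function.Injective φ
    · exact ⟨(b, b), fun h' => absurd h h'⟩
    · have h' := h
      simp only [Function.Injective, not_forall] at h'
      obtain ⟨x, y, h1, h2⟩ := h'
      exact ⟨(x, y), fun _ => ⟨h1, h2⟩⟩
  choose p hp using hex
  have hc : Fintype.card β ^ 2 * Fintype.card (β → V) =
      (univ : Finset ((β × β) × (β → V))).card := by
    rw [Finset.card_univ, Fintype.card_prod, Fintype.card_prod, sq]
  rw [hc, ← Finset.card_univ (α := V), ← Finset.card_product]
  refine Finset.card_le_card_of_injOn
    (fun q => (p q.1, Function.update q.1 (p q.1).1 q.2)) (fun _ _ => by simp) ?_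
  rintro ⟨φ, v⟩ h ⟨φ', v'⟩ h' he
  simp only [mem_coe, mem_product, mem_filter, mem_univ, true_and, and_true] at h h'
  simp only [Prod.mk.injEq] at he
  obtain ⟨h1, h2⟩ := he
  obtain ⟨e1, e2⟩ := hp φ h
  obtain ⟨e1', e2'⟩ := hp φ' h'
  rw [← h1] at h2 e1' e2'
  have hv : v = v' := by simpa using congrFun h2 (p φ).1
  have hoff : ∀ y, y ≠ (p φ).1 → φ y = φ' y := fun y hy => by simpa [hy] using congrFun h2 y
  have : φ = φ' := by
    funext y
    by_cases hy : y = (p φ).1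
    · rw [hy, e1, e1', hoff _ e2.symm]
    · exact hoff y hy
  rw [this, hv]

end Spl

/-- If `F` has at least one edge, then every `F`-splittable graph
is `F`-abundant. -/
theorem stmt_12 {α β : Type*} [Fintype α] [Fintype β]
    (F : SimpleGraph α) (H : SimpleGraph β)
    (hF : F.edgeSet.Nonempty) (hsplit : Splittable F H) :
    Abundant F H := by
  classical
  obtain ⟨e, he⟩ := hF
  induction e using Sym2.ind with
  | _ a₀ b₀ =>
  rw [SimpleGraph.mem_edgeSet] at he
  obtain ⟨σ, hs⟩ := hsplit
  obtain ⟨C, hC⟩ := Spl.main σ he hs Finset.univ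
  have hα : 0 < Fintype.card α := Fintype.card_pos_iff.2 ⟨a₀⟩
  set A : ℝ := (Fintype.card α : ℝ) with hA
  have hA0 : 0 < A := by rw [hA]; exact_mod_cast hα
  set B : ℝ := ((Fintype.card β ^ Fintype.card β : ℕ) : ℝ) with hB
  have hB0 : 0 < B := by
    rw [hB]
    have : 0 < Fintype.card β ^ Fintype.card β := by
      rcases Nat.eq_zero_or_pos (Fintype.card β) with h | h
      · rw [h]; norm_num
      · positivity
    exact_mod_cast this
  refine ⟨(1 / A ^ 2) ^ (C + 1) / 2 / B, ((C + 1 : ℕ) : ℝ), by positivity, by positivity, ?_⟩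
  intro ε hε _
  rw [Real.rpow_natCast]
  set q : ℝ := (ε / A ^ 2) ^ (C + 1) with hq
  have hq0 : 0 < q := by positivity
  obtain ⟨n₁, hn₁⟩ := exists_nat_ge (2 * (Fintype.card β : ℝ) ^ 2 / q)
  refine ⟨n₁ + 1, fun n hn G hfar => ?_⟩
  have hn0 : 0 < n := by omega
  have hn0' : (0 : ℝ) < n := by exact_mod_cast hn0
  obtain ⟨Fa, hI, hG, hcard⟩ := Spl.packing he hfar
  have h1 := hC n hn0 Fa hI
  rw [Fintype.card_fin] at hcard h1
  set M : ℝ := ((Fintype.card (β → Fin n) : ℕ) : ℝ) with hM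
  have hMn : M = (n : ℝ) ^ Fintype.card β := by
    rw [hM, Fintype.card_fun, Fintype.card_fin]; push_cast; rfl
  have hM0 : 0 < M := by rw [hMn]; positivity
  have h2 : M * q ≤ ((Spl.N F H σ Finset.univ Fa).card : ℝ) := by
    refine le_trans ?_ h1
    have : ε / A ^ 2 ≤ (Fa.card : ℝ) / (n : ℝ) ^ 2 := by
      rw [div_le_div_iff₀ (by positivity) (by positivity)]
      exact hcard
    rw [hq]
    gcongr
  set J := Finset.univ.filter (fun φ : β → Fin n => ¬ Function.Injective φ) with hJ
  have h3 : (J.card : ℝ) * n ≤ (Fintype.card β : ℝ) ^ 2 * M := by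
    have := Spl.noninj (β := β) (V := Fin n)
    rw [Fintype.card_fin] at this
    rw [hM, hJ]
    convert (Nat.cast_le (α := ℝ)).2 this using 1 <;> push_cast <;> congr
  have h4 : (J.card : ℝ) ≤ M * q / 2 := by
    have hnq : 2 * (Fintype.card β : ℝ) ^ 2 ≤ n * q := by
      rw [← div_le_iff₀ hq0]
      refine hn₁.trans ?_
      exact_mod_cast (by omega : n₁ ≤ n)
    refine le_of_mul_le_mul_right (h3.trans ?_) hn0'
    nlinarith
  set I := (Spl.N F H σ Finset.univ Fa) \ J with hIdef
  have h5 := Spl.count H G I (by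
    intro φ hφ
    rw [hIdef, Finset.mem_sdiff] at hφ
    obtain ⟨a1, a2⟩ := hφ
    refine ⟨by simpa [hJ] using a2, fun x y hxy => ?_⟩
    simp only [Spl.N, Finset.mem_filter, Finset.mem_univ, true_and] at a1
    obtain ⟨f, hf, e1, e2⟩ := a1.2 x (Finset.mem_univ _) y (Finset.mem_univ _) hxy
    rw [← e1, ← e2]
    exact hG f hf _ _ (σ.map_adj hxy))
  have h6 : ((Spl.N F H σ Finset.univ Fa).card : ℝ) ≤ I.card + J.card := by
    have := Finset.le_card_sdiff J (Spl.N F H σ Finset.univ Fa)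
    have h : (Spl.N F H σ Finset.univ Fa).card ≤ I.card + J.card := by
      rw [hIdef]; omega
    exact_mod_cast h
  have h7 : (I.card : ℝ) ≤ B * copyCount H G := by
    rw [hB]; exact_mod_cast h5
  rw [Nat.card_eq_fintype_card, ← hMn]
  have h8 : M * q / 2 ≤ B * copyCount H G := by linarith
  have h9 : (1 / A ^ 2) ^ (C + 1) / 2 / B * ε ^ (C + 1) * M = (M * q / 2) / B := by
    rw [hq, div_pow, div_pow, one_pow]; field_simp
  rw [h9, div_le_iff₀ hB0]
  linarith
end
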